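/- arXiv:2403.09335 — 8 statements merged into one kernel-verified Lean document; each statement's English description precedes it below -/
import Mathlib

section
/- Let N ≥ 1 and m ≥ 1 be integers and let f : ℝ → ℝ be m times continuously differentiable on [0,N]. Then the backward Euler–Maclaurin formula holds: Σ_{k=0}^{N−1} f(k) = ∫_0^N f(s) ds + Σ_{l=1}^{m} ((bernoulli l)/l!)·(f^{(l−1)}(N) − f^{(l−1)}(0)) + R_m, where the remainder is R_m = ((−1)^{m+1}/m!)·∫_0^N f^{(m)}(s)·P_m(s − ⌊s⌋) ds. -/
open scoped Nat
open MeasureTheory intervalIntegral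

/-- The `l`-th Bernoulli polynomial `P_l(x) = ∑_{j=0}^l C(l,j) · B_j · x^{l-j}`,
with `bernoulli 1 = -1/2`. -/
noncomputable def bernoulliPoly (l : ℕ) (x : ℝ) : ℝ :=
  ∑ j ∈ Finset.range (l + 1), (l.choose j : ℝ) * ((bernoulli j : ℚ) : ℝ) * x ^ (l - j)

/-!
Since `Bₗ₊₁' = (l + 1) Bₗ`, integrating by parts on a unit interval turns
`((-1) ^ l / l!) ∫ Bₗ(s - a) g(s) ds` into the same expression with `l + 1` and `g'`, up to boundary
terms. As `(-1) ^ l * Bₗ(1) = Bₗ(0)`, and `Bₗ(1) = Bₗ(0)` unless `l = 1`, the boundary term of every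
order is a multiple of an increment of `g`, except that order one also produces the value `g(a)`.
The increments telescope when consecutive unit intervals are added up.
-/

theorem bernoulliPoly_eq_bernoulliFun (l : ℕ) : bernoulliPoly l = bernoulliFun l := by
  ext x
  simp only [bernoulliPoly, bernoulliFun, Polynomial.bernoulli, Polynomial.map_sum,
    Polynomial.map_monomial, Polynomial.eval_finsetSum, Polynomial.eval_monomial]
  refine Finset.sum_congr rfl fun j _ ↦ ?_
  simp only [map_mul, map_natCast, eq_ratCast]
  ring

theorem neg_one_pow_mul_bernoulliFun_eval_one (l : ℕ) :
    (-1) ^ l * bernoulliFun l 1 = bernoulli l := by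
  rw [← bernoulliFun_eval_one_sub, sub_self, bernoulliFun_eval_zero]

theorem neg_one_pow_mul_bernoulliFun_eval_zero (l : ℕ) :
    (-1) ^ l * bernoulliFun l 0 = bernoulli l + if l = 1 then 1 else 0 := by
  rw [← bernoulliFun_eval_one_sub, sub_zero, bernoulliFun_eval_one, bernoulliFun_eval_zero]

theorem hasDerivWithinAt_iteratedDerivWithin {𝕜 F : Type*} [NontriviallyNormedField 𝕜]
    [NormedAddCommGroup F] [NormedSpace 𝕜 F] {n : WithTop ℕ∞} {l : ℕ} {f : 𝕜 → F} {s : Set 𝕜}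
    {x : 𝕜} (hf : ContDiffOn 𝕜 n f s) (hl : l < n) (hs : UniqueDiffOn 𝕜 s) (hx : x ∈ s) :
    HasDerivWithinAt (iteratedDerivWithin l f s) (iteratedDerivWithin (l + 1) f s x) s x := by
  rw [iteratedDerivWithin_succ]
  exact (hf.differentiableOn_iteratedDerivWithin hl hs x hx).hasDerivWithinAt

section

variable {E : Type*} [NormedAddCommGroup E] [NormedSpace ℝ E]

theorem integral_fract_eq_sum {F : ℝ → ℝ → E} {a : ℝ} {N : ℕ}
    (hF : ∀ k < N, IntervalIntegrable (fun s ↦ F (s - (a + k)) s) volume (a + k) (a + k + 1)) :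
    ∫ s in a..a + N, F (Int.fract (s - a)) s =
      ∑ k ∈ Finset.range N, ∫ s in a + k..a + k + 1, F (s - (a + k)) s := by
  have h_eqOn (k : ℕ) : Set.EqOn (fun s ↦ F (s - (a + k)) s) (fun s ↦ F (Int.fract (s - a)) s)
      (Set.uIoo (a + k) (a + k + 1)) := by
    intro s hs
    rw [Set.uIoo_of_le (by simp)] at hs
    have h_fract : Int.fract (s - a) = s - (a + k) :=
      Int.fract_eq_iff.2 ⟨by linarith [hs.1], by linarith [hs.2], k, by push_cast; ring⟩
    simp only [h_fract]
  have h_adjacent := sum_integral_adjacent_intervals (a := fun k : ℕ ↦ a + k) (n := N)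
    fun k hk ↦ by simpa [add_assoc] using (hF k hk).congr_uIoo (h_eqOn k)
  simp only [Nat.cast_zero, add_zero, Nat.cast_add, Nat.cast_one, ← add_assoc] at h_adjacent
  rw [← h_adjacent]
  exact Finset.sum_congr rfl fun k _ ↦ (integral_congr_uIoo (h_eqOn k)).symm

variable [CompleteSpace E]

theorem integral_bernoulliFun_succ_smul_deriv (l : ℕ) {a : ℝ} {g g' : ℝ → E}
    (hg : ∀ x ∈ Set.Icc a (a + 1), HasDerivWithinAt g (g' x) (Set.Icc a (a + 1)) x)
    (hg' : IntervalIntegrable g' volume a (a + 1)) :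
    ∫ s in a..a + 1, bernoulliFun (l + 1) (s - a) • g' s =
      bernoulliFun (l + 1) 1 • g (a + 1) - bernoulliFun (l + 1) 0 • g a
        - (l + 1 : ℝ) • ∫ s in a..a + 1, bernoulliFun l (s - a) • g s := by
  have h_bernoulli (x : ℝ) : HasDerivAt (fun s ↦ bernoulliFun (l + 1) (s - a))
      ((l + 1) * bernoulliFun l (x - a)) x := by
    simpa using (hasDerivAt_bernoulliFun (l + 1) (x - a)).comp_sub_const x a
  rw [← Set.uIcc_of_le (by simp)] at hg
  rw [integral_smul_deriv_eq_deriv_smul_of_hasDerivWithinAt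
    (fun x _ ↦ (h_bernoulli x).hasDerivWithinAt) hg
    (Continuous.intervalIntegrable (by fun_prop) _ _) hg']
  simp only [add_sub_cancel_left, sub_self, mul_smul, intervalIntegral.integral_smul]

theorem neg_one_pow_div_factorial_smul_integral_bernoulliFun_smul (l : ℕ) {a : ℝ} {g g' : ℝ → E}
    (hg : ∀ x ∈ Set.Icc a (a + 1), HasDerivWithinAt g (g' x) (Set.Icc a (a + 1)) x)
    (hg' : IntervalIntegrable g' volume a (a + 1)) :
    ((-1 : ℝ) ^ (l + 1) / l !) • ∫ s in a..a + 1, bernoulliFun l (s - a) • g s =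
      ((bernoulli (l + 1) : ℝ) / (l + 1)!) • (g (a + 1) - g a) - (if l = 0 then g a else 0)
        + ((-1 : ℝ) ^ (l + 2) / (l + 1)!) •
            ∫ s in a..a + 1, bernoulliFun (l + 1) (s - a) • g' s := by
  have h_boundary : ((-1 : ℝ) ^ (l + 1) / (l + 1)!) •
        (bernoulliFun (l + 1) 1 • g (a + 1) - bernoulliFun (l + 1) 0 • g a) =
      ((bernoulli (l + 1) : ℝ) / (l + 1)!) • (g (a + 1) - g a) - if l = 0 then g a else 0 := by
    rw [smul_sub, smul_smul, smul_smul, div_mul_eq_mul_div, div_mul_eq_mul_div,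
      neg_one_pow_mul_bernoulliFun_eval_one, neg_one_pow_mul_bernoulliFun_eval_zero]
    obtain rfl | hl := eq_or_ne l 0
    · simp only [zero_add, Nat.factorial_one, Nat.cast_one, div_one, if_true]
      module
    · simp only [Nat.add_eq_right, hl, if_false]
      module
  have h_factorial : (-1 : ℝ) ^ (l + 1) / l ! = (-1) ^ (l + 1) / (l + 1)! * (l + 1) := by
    rw [Nat.factorial_succ]
    push_cast
    field_simp
  rw [integral_bernoulliFun_succ_smul_deriv l hg hg', ← h_boundary, h_factorial]
  module

theorem backward_euler_maclaurin_unit_interval {m : ℕ} (hm : 1 ≤ m) {f : ℝ → E} {S : Set ℝ} {a : ℝ}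
    (hf : ContDiffOn ℝ m f S) (hS : UniqueDiffOn ℝ S) (haS : Set.Icc a (a + 1) ⊆ S) :
    f a = (∫ s in a..a + 1, f s)
      + ∑ l ∈ Finset.Icc 1 m, ((bernoulli l : ℝ) / l !) •
          (iteratedDerivWithin (l - 1) f S (a + 1) - iteratedDerivWithin (l - 1) f S a)
      + ((-1 : ℝ) ^ (m + 1) / m !) •
          ∫ s in a..a + 1, bernoulliFun m (s - a) • iteratedDerivWithin m f S s := by
  have h_step {l : ℕ} (hf : ContDiffOn ℝ (l + 1 : ℕ) f S) :=
    neg_one_pow_div_factorial_smul_integral_bernoulliFun_smul l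
      (fun x hx ↦ (hasDerivWithinAt_iteratedDerivWithin hf (by exact_mod_cast l.lt_succ_self) hS
        (haS hx)).mono haS)
      (((hf.continuousOn_iteratedDerivWithin le_rfl hS).mono haS).intervalIntegrable_of_Icc
        (by simp))
  induction m, hm using Nat.le_induction with
  | base =>
    have h_zero := h_step hf
    simp only [zero_add, pow_one, Nat.factorial_zero, Nat.cast_one, div_one, bernoulliFun_zero,
      one_smul, iteratedDerivWithin_zero, if_true, neg_smul] at h_zero
    rw [Finset.Icc_self, Finset.sum_singleton, Nat.sub_self, iteratedDerivWithin_zero]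
    linear_combination (norm := module) h_zero
  | succ l hl ih =>
    have h_succ := h_step hf
    rw [if_neg (by lia), sub_zero] at h_succ
    rw [Finset.sum_Icc_succ_top (by lia), Nat.add_sub_cancel, add_assoc, add_assoc, ← h_succ,
      ← add_assoc]
    exact ih (hf.of_le (by exact_mod_cast l.le_succ))

theorem backward_euler_maclaurin_general {N m : ℕ} (hm : 1 ≤ m) {f : ℝ → E} {S : Set ℝ} {a : ℝ}
    (hf : ContDiffOn ℝ m f S) (hS : UniqueDiffOn ℝ S) (haS : Set.Icc a (a + N) ⊆ S) :
    ∑ k ∈ Finset.range N, f (a + k) =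
      (∫ s in a..a + N, f s)
      + ∑ l ∈ Finset.Icc 1 m, ((bernoulli l : ℝ) / l !) •
          (iteratedDerivWithin (l - 1) f S (a + N) - iteratedDerivWithin (l - 1) f S a)
      + ((-1 : ℝ) ^ (m + 1) / m !) •
          ∫ s in a..a + N, bernoulliFun m (Int.fract (s - a)) • iteratedDerivWithin m f S s := by
  have h_unit {k : ℕ} (hk : k < N) : Set.Icc (a + k) (a + k + 1) ⊆ S := by
    refine (Set.Icc_subset_Icc (by simp) ?_).trans haS
    rw [add_assoc]
    gcongr
    exact_mod_cast hk
  have h_integrable {g : ℝ → E} (hg : ContinuousOn g S) {k : ℕ} (hk : k < N) :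
      IntervalIntegrable g volume (a + k) (a + k + 1) :=
    (hg.mono (h_unit hk)).intervalIntegrable_of_Icc (by simp)
  have h_integral : ∑ k ∈ Finset.range N, ∫ s in a + k..a + k + 1, f s = ∫ s in a..a + N, f s :=
    (integral_fract_eq_sum (F := fun _ s ↦ f s) fun k hk ↦
      h_integrable hf.continuousOn hk).symm
  have h_telescope (g : ℝ → E) :
      ∑ k ∈ Finset.range N, (g (a + k + 1) - g (a + k)) = g (a + N) - g a := by
    simpa [add_assoc] using Finset.sum_range_sub (fun k : ℕ ↦ g (a + k)) N
  have h_remainder := integral_fract_eq_sum (N := N) (a := a)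
    (F := fun t s ↦ bernoulliFun m t • iteratedDerivWithin m f S s) fun k hk ↦
      (h_integrable (hf.continuousOn_iteratedDerivWithin le_rfl hS) hk).continuousOn_smul
        (by fun_prop)
  rw [Finset.sum_congr rfl fun k hk ↦
      backward_euler_maclaurin_unit_interval hm hf hS (h_unit (Finset.mem_range.1 hk)),
    Finset.sum_add_distrib, Finset.sum_add_distrib, h_integral, Finset.sum_comm, ← Finset.smul_sum,
    ← h_remainder]
  simp only [← Finset.smul_sum, h_telescope]

end

/-- Backward Euler–Maclaurin formula with explicit integral remainder. -/
theorem backward_euler_maclaurin (N m : ℕ) (hN : 1 ≤ N) (hm : 1 ≤ m) (f : ℝ → ℝ)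
    (hf : ContDiffOn ℝ m f (Set.Icc 0 (N : ℝ))) :
    ∑ k ∈ Finset.range N, f (k : ℝ) =
      (∫ s in (0:ℝ)..(N:ℝ), f s)
      + ∑ l ∈ Finset.Icc 1 m,
          (((bernoulli l : ℚ) : ℝ) / (l ! : ℝ)) *
            (iteratedDerivWithin (l - 1) f (Set.Icc 0 (N : ℝ)) (N : ℝ)
              - iteratedDerivWithin (l - 1) f (Set.Icc 0 (N : ℝ)) 0)
      + ((-1 : ℝ) ^ (m + 1) / (m ! : ℝ)) *
          ∫ s in (0:ℝ)..(N:ℝ),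
            iteratedDerivWithin m f (Set.Icc 0 (N : ℝ)) s * bernoulliPoly m (s - ⌊s⌋) := by
  simpa [bernoulliPoly_eq_bernoulliFun, mul_comm] using
    backward_euler_maclaurin_general (a := 0) hm hf (uniqueDiffOn_Icc (by exact_mod_cast hN))
      (by simp)
end

section
/- Let X : ℝ → ℝ^d be continuously differentiable and s ≤ t. For every word (j_1,…,j_n) with n ≥ 1 and each j_k ∈ {1,…,d}, one has Σ_{k=0}^{n} (−1)^{n−k}·⟨S_{s,t}(X),(j_1,…,j_k)⟩·⟨S♭_{s,t}(X),(j_{k+1},…,j_n)⟩ = 0 (the k = 0 term uses the empty word, with value 1). Equivalently, the flip signature is the image of the group inverse of the signature under the involution Γ multiplying the degree-n component by (−1)^n. -/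
open scoped Nat
open MeasureTheory

/-- The open simplex `{(t_1,…,t_n) : s < t_1 < ⋯ < t_n < t}` in `ℝ^n`. -/
def simplexSet (n : ℕ) (s t : ℝ) : Set (Fin n → ℝ) :=
  {u | (∀ i, s < u i ∧ u i < t) ∧ ∀ i j : Fin n, i < j → u i < u j}

/-- Signature coefficient `⟨S_{s,t}(X), (w 0, …, w (n-1))⟩` of the path `X` over `[s,t]`,
for the word given by the first `n` letters of `w`; equal to `1` for the empty word. -/
noncomputable def sigCoeff {d : ℕ} (X : ℝ → Fin d → ℝ) (s t : ℝ) (n : ℕ) (w : ℕ → Fin d) : ℝ :=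
  if n = 0 then 1 else
    ∫ u in simplexSet n s t, ∏ k : Fin n, deriv (fun r => X r (w k)) (u k)

/-- Flip signature coefficient `⟨S♭_{s,t}(X), (w 0, …, w (n-1))⟩`:
the `k`-th letter is integrated against the time variable `t_{n+1-k}`. -/
noncomputable def flipCoeff {d : ℕ} (X : ℝ → Fin d → ℝ) (s t : ℝ) (n : ℕ) (w : ℕ → Fin d) : ℝ :=
  if n = 0 then 1 else
    ∫ u in simplexSet n s t, ∏ k : Fin n, deriv (fun r => X r (w k)) (u k.rev)

/-!
The product `⟨S, (j_1,…,j_k)⟩ ⟨S♭, (j_{k+1},…,j_n)⟩` is the integral of `∏ dX^{j_i}(u_i)` over the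
set `U_k` of tuples whose first `k` entries increase and whose remaining entries decrease. Off the
null set of tuples with a repeated entry, comparing `u_k` with `u_{k+1}` splits `U_k` into
`U_{k-1} ∩ U_k` (where `u_{k+1} < u_k`) and `U_k ∩ U_{k+1}` (where `u_k < u_{k+1}`), while
`U_0 ⊆ U_1` and `U_n ⊆ U_{n-1}`. Hence each piece occurs twice in the alternating sum, with opposite
signs.
-/

section UpDownSet

variable {α : Type*} [Preorder α]

/-- The set of tuples whose first `k` entries increase and whose remaining entries decrease, with
no condition relating the two blocks: the domain of integration of the product of a degree-`k`
signature coefficient with a flip signature coefficient. -/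
def upDownSet (α : Type*) [Preorder α] (n k : ℕ) : Set (Fin n → α) :=
  {u | StrictMonoOn u {i | (i : ℕ) < k} ∧ StrictAntiOn u {i | k ≤ (i : ℕ)}}

theorem mem_upDownSet_add_iff {k m : ℕ} {u : Fin (k + m) → α} :
    u ∈ upDownSet α (k + m) k ↔
      StrictMono (fun i => u (Fin.castAdd m i)) ∧ StrictAnti (fun j => u (Fin.natAdd k j)) := by
  simp [upDownSet, StrictMonoOn, StrictAntiOn, StrictMono, StrictAnti, Fin.forall_fin_add,
    (Fin.strictMono_castAdd m).lt_iff_lt]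

theorem upDownSet_zero_subset (n : ℕ) : upDownSet α n 0 ⊆ upDownSet α n 1 := by
  rintro u ⟨-, hanti⟩
  refine ⟨fun i _ j hj hij => ?_, hanti.mono fun i _ => Nat.zero_le i⟩
  grind [Fin.lt_def]

theorem upDownSet_self_subset (n : ℕ) : upDownSet α (n + 1) (n + 1) ⊆ upDownSet α (n + 1) n := by
  rintro u ⟨hmono, -⟩
  refine ⟨hmono.mono fun i _ => i.isLt, fun i hi j _ hij => ?_⟩
  grind [Fin.lt_def]

theorem mem_upDownSet_iff_of_mem_succ {n : ℕ} {u : Fin n → α} {i j : Fin n}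
    (hij : (j : ℕ) = i + 1) (hu : u ∈ upDownSet α n (i + 1)) :
    u ∈ upDownSet α n i ↔ u j < u i := by
  refine ⟨fun h => h.2 (by grind) (by grind) (by grind), fun hji => ⟨hu.1.mono (by grind), ?_⟩⟩
  intro a ha b hb hab
  have hjb : u b ≤ u j := hu.2.antitoneOn (by grind) (by grind) (by grind)
  rcases eq_or_ne a i with rfl | hai
  · exact hjb.trans_lt hji
  · exact hu.2 (by grind) (by grind) hab

theorem mem_upDownSet_succ_succ_iff {n : ℕ} {u : Fin n → α} {i j : Fin n}
    (hij : (j : ℕ) = i + 1) (hu : u ∈ upDownSet α n (i + 1)) :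
    u ∈ upDownSet α n (i + 2) ↔ u i < u j := by
  refine ⟨fun h => h.1 (by grind) (by grind) (by grind), fun hlt => ⟨?_, hu.2.mono (by grind)⟩⟩
  intro a ha b hb hab
  have hai : u a ≤ u i := hu.1.monotoneOn (by grind) (by grind) (by grind)
  rcases eq_or_ne b j with rfl | hbj
  · exact hai.trans_lt hlt
  · exact hu.1 (by grind) (by grind) hab

end UpDownSet

section Product

variable {α : Type*} [MeasurableSpace α]

theorem setIntegral_castAdd_mul_natAdd {𝕜 : Type*} [RCLike 𝕜] (ν : Measure α) [SigmaFinite ν]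
    {k m : ℕ} (A : Set (Fin k → α)) (B : Set (Fin m → α)) (F : (Fin k → α) → 𝕜)
    (G : (Fin m → α) → 𝕜) :
    ∫ u in {u : Fin (k + m) → α |
        (fun i => u (Fin.castAdd m i)) ∈ A ∧ (fun j => u (Fin.natAdd k j)) ∈ B},
      F (fun i => u (Fin.castAdd m i)) * G (fun j => u (Fin.natAdd k j)) ∂Measure.pi (fun _ => ν) =
      (∫ v in A, F v ∂Measure.pi fun _ => ν) * ∫ w in B, G w ∂Measure.pi fun _ => ν := by
  let e : (Fin (k + m) → α) ≃ᵐ (Fin k → α) × (Fin m → α) :=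
    (MeasurableEquiv.piCongrLeft (fun _ => α) finSumFinEquiv).symm.trans
      (MeasurableEquiv.sumPiEquivProdPi fun _ => α)
  have he : MeasurePreserving e (Measure.pi fun _ => ν)
      ((Measure.pi fun _ => ν).prod (Measure.pi fun _ => ν)) :=
    (measurePreserving_sumPiEquivProdPi fun _ => ν).comp
      (measurePreserving_piCongrLeft (fun _ => ν) finSumFinEquiv).symm
  rw [← setIntegral_prod_mul, ← he.setIntegral_preimage_emb e.measurableEmbedding]
  rfl

theorem setIntegral_strictMono_comp_rev [Preorder α] (ν : Measure α) [SigmaFinite ν] {E : Type*}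
    [NormedAddCommGroup E] [NormedSpace ℝ E] {n : ℕ} (F : (Fin n → α) → E) :
    ∫ u in {u : Fin n → α | StrictMono u}, F (fun i => u i.rev) ∂Measure.pi (fun _ => ν) =
      ∫ u in {u : Fin n → α | StrictAnti u}, F u ∂Measure.pi fun _ => ν := by
  let e : (Fin n → α) ≃ᵐ (Fin n → α) :=
    (MeasurableEquiv.piCongrLeft (fun _ => α) Fin.revPerm).symm
  have he : MeasurePreserving e (Measure.pi fun _ => ν) (Measure.pi fun _ => ν) :=
    (measurePreserving_piCongrLeft (fun _ => ν) Fin.revPerm).symm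
  have hpre : e ⁻¹' {u | StrictAnti u} = {u | StrictMono u} := by
    ext u
    refine ⟨fun h => ?_, fun h => h.comp_strictAnti Fin.rev_strictAnti⟩
    have hcomp : StrictMono (e u ∘ Fin.rev) := h.comp Fin.rev_strictAnti
    have hrev : e u ∘ Fin.rev = u := funext fun i => congrArg u i.rev_rev
    rwa [hrev] at hcomp
  rw [← he.setIntegral_preimage_emb e.measurableEmbedding _ {u | StrictAnti u}, hpre]
  rfl

theorem ae_pi_ne_of_ne [MeasurableEq α] {ι : Type*} [Fintype ι] (μ : ι → Measure α)
    [∀ i, SigmaFinite (μ i)] {i j : ι} [NullSingletonClass (μ j)] (hij : i ≠ j) :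
    ∀ᵐ u ∂Measure.pi μ, u i ≠ u j := by
  classical
  have hsplit := measurePreserving_piEquivPiSubtypeProd μ (· ≠ j)
  refine hsplit.quasiMeasurePreserving.ae
    (p := fun z => z.1 ⟨i, hij⟩ ≠ z.2 ⟨j, not_not_intro rfl⟩) ?_
  have hmeas : MeasurableSet {z : ({l // l ≠ j} → α) × ({l // ¬l ≠ j} → α) |
      z.1 ⟨i, hij⟩ ≠ z.2 ⟨j, not_not_intro rfl⟩} :=
    (measurableSet_eq_fun (by fun_prop) (by fun_prop)).compl
  rw [Measure.ae_prod_iff_ae_ae hmeas]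
  refine .of_forall fun x => ?_
  filter_upwards [Measure.ae_eval_ne (μ := fun l : {l // ¬l ≠ j} => μ l) ⟨j, not_not_intro rfl⟩
    (x ⟨i, hij⟩)] with y hy using hy.symm

end Product

section OrderedIntegral

variable {α : Type*} [MeasurableSpace α] {𝕜 : Type*} [RCLike 𝕜]

/-- The iterated integral `∫_{u_0<⋯<u_{n-1}} ∏ f_i(u_i)` against the measure `ν`; taking for `ν`
Lebesgue measure on `(s, t)` and for `f` the velocities of a path gives its signature. -/
noncomputable def increasingIntegral [Preorder α] (ν : Measure α) (n : ℕ) (f : ℕ → α → 𝕜) : 𝕜 :=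
  ∫ u in {u : Fin n → α | StrictMono u}, ∏ i : Fin n, f i (u i) ∂Measure.pi fun _ => ν

/-- The iterated integral `∫_{u_0>⋯>u_{n-1}} ∏ f_i(u_i)` against the measure `ν`, which encodes
the flip signature: the time variables are relabelled instead of the letters. -/
noncomputable def decreasingIntegral [Preorder α] (ν : Measure α) (n : ℕ) (f : ℕ → α → 𝕜) : 𝕜 :=
  ∫ u in {u : Fin n → α | StrictAnti u}, ∏ i : Fin n, f i (u i) ∂Measure.pi fun _ => ν

theorem increasingIntegral_zero [Preorder α] (ν : Measure α) (f : ℕ → α → 𝕜) :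
    increasingIntegral ν 0 f = 1 := by
  simp [increasingIntegral, Subsingleton.strictMono, Measure.real]

theorem decreasingIntegral_zero [Preorder α] (ν : Measure α) (f : ℕ → α → 𝕜) :
    decreasingIntegral ν 0 f = 1 := by
  simp [decreasingIntegral, Subsingleton.strictAnti, Measure.real]

theorem increasingIntegral_mul_decreasingIntegral [Preorder α] (ν : Measure α) [SigmaFinite ν]
    (k m : ℕ) (f : ℕ → α → 𝕜) :
    increasingIntegral ν k f * decreasingIntegral ν m (fun i => f (k + i)) =
      ∫ u in upDownSet α (k + m) k, ∏ i : Fin (k + m), f i (u i) ∂Measure.pi fun _ => ν := by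
  have hset : upDownSet α (k + m) k = {u | (fun i => u (Fin.castAdd m i)) ∈ {v | StrictMono v} ∧
      (fun j => u (Fin.natAdd k j)) ∈ {v | StrictAnti v}} :=
    Set.ext fun _ => mem_upDownSet_add_iff
  simp only [increasingIntegral, decreasingIntegral, Fin.prod_univ_add, Fin.val_castAdd,
    Fin.val_natAdd, hset]
  exact (setIntegral_castAdd_mul_natAdd ν _ _ _ _).symm

end OrderedIntegral

section Telescoping

variable {α : Type*} [LinearOrder α] [MeasurableSpace α] [TopologicalSpace α]
  [OrderClosedTopology α] [SecondCountableTopology α] [OpensMeasurableSpace α]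

theorem measurableSet_upDownSet (n k : ℕ) : MeasurableSet (upDownSet α n k) := by
  unfold upDownSet StrictMonoOn StrictAntiOn
  measurability

section

variable {n k : ℕ} {μ : Measure (Fin (n + 1) → α)} {E : Type*} [NormedAddCommGroup E]
  [NormedSpace ℝ E] {F : (Fin (n + 1) → α) → E}

theorem setIntegral_upDownSet_succ (hk : k < n) (hμ : ∀ i j, i ≠ j → ∀ᵐ u ∂μ, u i ≠ u j)
    (hF : Integrable F μ) :
    ∫ u in upDownSet α (n + 1) (k + 1), F u ∂μ =
      (∫ u in upDownSet α (n + 1) k ∩ upDownSet α (n + 1) (k + 1), F u ∂μ) +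
        ∫ u in upDownSet α (n + 1) (k + 1) ∩ upDownSet α (n + 1) (k + 2), F u ∂μ := by
  let i : Fin (n + 1) := ⟨k, by omega⟩
  let j : Fin (n + 1) := ⟨k + 1, by omega⟩
  have hdiff : (upDownSet α (n + 1) (k + 1) \ upDownSet α (n + 1) k : Set _) =ᵐ[μ]
      (upDownSet α (n + 1) (k + 1) ∩ upDownSet α (n + 1) (k + 2) : Set _) := by
    filter_upwards [hμ i j (by simp [i, j, Fin.ext_iff])] with u hu
    refine propext (and_congr_right fun hmem => ?_)
    change ¬u ∈ upDownSet α (n + 1) (i : ℕ) ↔ u ∈ upDownSet α (n + 1) ((i : ℕ) + 2)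
    rw [mem_upDownSet_iff_of_mem_succ (j := j) rfl hmem,
      mem_upDownSet_succ_succ_iff (j := j) rfl hmem, not_lt]
    exact hu.le_iff_lt
  rw [← integral_inter_add_sdiff (measurableSet_upDownSet _ k) hF.integrableOn,
    setIntegral_congr_set hdiff, Set.inter_comm]

theorem sum_range_setIntegral_upDownSet (hk : k ≤ n) (hμ : ∀ i j, i ≠ j → ∀ᵐ u ∂μ, u i ≠ u j)
    (hF : Integrable F μ) :
    ∑ l ∈ Finset.range (k + 1), (-1 : ℝ) ^ l • ∫ u in upDownSet α (n + 1) l, F u ∂μ =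
      (-1 : ℝ) ^ k • ∫ u in upDownSet α (n + 1) k ∩ upDownSet α (n + 1) (k + 1), F u ∂μ := by
  induction k with
  | zero => simp [Set.inter_eq_left.2 (upDownSet_zero_subset (α := α) (n + 1))]
  | succ k ih =>
    rw [Finset.sum_range_succ, ih (by omega), setIntegral_upDownSet_succ (by omega) hμ hF]
    module

theorem sum_setIntegral_upDownSet_eq_zero (hμ : ∀ i j, i ≠ j → ∀ᵐ u ∂μ, u i ≠ u j)
    (hF : Integrable F μ) :
    ∑ k ∈ Finset.range (n + 2), (-1 : ℝ) ^ k • ∫ u in upDownSet α (n + 1) k, F u ∂μ = 0 := by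
  rw [Finset.sum_range_succ, sum_range_setIntegral_upDownSet le_rfl hμ hF,
    Set.inter_eq_right.2 (upDownSet_self_subset n)]
  module

end

theorem sum_increasingIntegral_mul_decreasingIntegral_eq_zero {𝕜 : Type*} [RCLike 𝕜]
    {ν : Measure α} [SigmaFinite ν] [NullSingletonClass ν] {f : ℕ → α → 𝕜} {n : ℕ} (hn : n ≠ 0)
    (hf : ∀ i < n, Integrable (f i) ν) :
    ∑ k ∈ Finset.range (n + 1), (-1 : 𝕜) ^ (n - k) * increasingIntegral ν k f *
      decreasingIntegral ν (n - k) (fun i => f (k + i)) = 0 := by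
  have hterm : ∀ k ∈ Finset.range (n + 1), (-1 : 𝕜) ^ (n - k) * increasingIntegral ν k f *
      decreasingIntegral ν (n - k) (fun i => f (k + i)) = (-1 : ℝ) ^ n • (-1 : ℝ) ^ k •
        ∫ u in upDownSet α n k, ∏ i : Fin n, f i (u i) ∂Measure.pi fun _ => ν := by
    intro k hk
    obtain ⟨m, rfl⟩ := Nat.exists_eq_add_of_le (Finset.mem_range_succ_iff.1 hk)
    rw [Nat.add_sub_cancel_left, mul_assoc, increasingIntegral_mul_decreasingIntegral, smul_smul,
      pow_add, mul_right_comm, ← mul_pow, neg_one_mul, neg_neg, one_pow, one_mul,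
      RCLike.real_smul_eq_coe_mul]
    push_cast
    rfl
  rw [Finset.sum_congr rfl hterm, ← Finset.smul_sum]
  obtain ⟨n, rfl⟩ := Nat.exists_eq_succ_of_ne_zero hn
  have hF : Integrable (fun u : Fin (n + 1) → α => ∏ i : Fin (n + 1), f i (u i))
      (Measure.pi fun _ => ν) :=
    Integrable.fintype_prod fun i => hf i i.isLt
  rw [sum_setIntegral_upDownSet_eq_zero (fun _ _ => ae_pi_ne_of_ne fun _ => ν) hF, smul_zero]

end Telescoping

section Signature

theorem simplexSet_eq_inter (n : ℕ) (s t : ℝ) :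
    simplexSet n s t = {u | StrictMono u} ∩ Set.univ.pi fun _ => Set.Ioo s t := by
  ext u
  simp only [simplexSet, Set.mem_ofPred_eq, Set.mem_inter_iff, Set.mem_univ_pi, Set.mem_Ioo]
  exact and_comm

theorem volume_restrict_simplexSet (n : ℕ) (s t : ℝ) :
    volume.restrict (simplexSet n s t) =
      (Measure.pi fun _ => volume.restrict (Set.Ioo s t)).restrict {u | StrictMono u} := by
  rw [← Measure.restrict_pi_pi, Measure.restrict_restrict'
    (MeasurableSet.univ_pi fun _ => measurableSet_Ioo), ← simplexSet_eq_inter, volume_pi]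

variable {d : ℕ} (X : ℝ → Fin d → ℝ) (s t : ℝ) (n : ℕ) (w : ℕ → Fin d)

theorem sigCoeff_eq_increasingIntegral :
    sigCoeff X s t n w =
      increasingIntegral (volume.restrict (Set.Ioo s t)) n fun i => deriv fun r => X r (w i) := by
  rcases eq_or_ne n 0 with rfl | hn
  · rw [sigCoeff, if_pos rfl, increasingIntegral_zero]
  · rw [sigCoeff, if_neg hn, volume_restrict_simplexSet, increasingIntegral]

theorem flipCoeff_eq_decreasingIntegral :
    flipCoeff X s t n w =
      decreasingIntegral (volume.restrict (Set.Ioo s t)) n fun i => deriv fun r => X r (w i) := by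
  rcases eq_or_ne n 0 with rfl | hn
  · rw [flipCoeff, if_pos rfl, decreasingIntegral_zero]
  · rw [flipCoeff, if_neg hn, volume_restrict_simplexSet, decreasingIntegral,
      ← setIntegral_strictMono_comp_rev]

end Signature

theorem flip_signature_is_gamma_inverse_general {d : ℕ} {X : ℝ → Fin d → ℝ} {s t : ℝ}
    (hX : ∀ j, AbsolutelyContinuousOnInterval (fun r => X r j) s t)
    {n : ℕ} (hn : n ≠ 0) (w : ℕ → Fin d) :
    ∑ k ∈ Finset.range (n + 1),
      (-1 : ℝ) ^ (n - k) * sigCoeff X s t k w * flipCoeff X s t (n - k) (fun i => w (k + i))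
      = 0 := by
  have hderiv (j : Fin d) : IntegrableOn (deriv fun r => X r j) (Set.Ioo s t) :=
    (hX j).intervalIntegrable_deriv.1.mono_set Set.Ioo_subset_Ioc_self
  simp only [sigCoeff_eq_increasingIntegral, flipCoeff_eq_decreasingIntegral]
  exact sum_increasingIntegral_mul_decreasingIntegral_eq_zero hn fun i _ => hderiv (w i)

/-- The flip signature is the image of the group inverse of the signature under the
involution `Γ`: for every nonempty word the convolution of `Γ S` with `S♭` vanishes. -/
theorem flip_signature_is_gamma_inverse {d : ℕ} (X : ℝ → Fin d → ℝ)
    (hX : ∀ j, ContDiff ℝ 1 (fun r => X r j)) (s t : ℝ) (hst : s ≤ t)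
    (n : ℕ) (hn : 1 ≤ n) (w : ℕ → Fin d) :
    ∑ k ∈ Finset.range (n + 1),
      (-1 : ℝ) ^ (n - k) * sigCoeff X s t k w * flipCoeff X s t (n - k) (fun i => w (k + i))
      = 0 := by
  exact flip_signature_is_gamma_inverse_general
    (fun j => (hX j).contDiffOn.absolutelyContinuousOnInterval) (Nat.one_le_iff_ne_zero.1 hn) w
end

section
/- Let N ≥ 1 be an integer, X : ℝ → ℝ continuously differentiable, and b_0 = 1, b_1, b_2, … real constants. Then for every l ≥ 1 and every t ∈ [0,N], the forward sawtooth function satisfies Z^+_l(t) = Σ_{j=0}^{l} ((X_t − X_0)^{l−j}/(l−j)!)·b_j − Σ_{k=0}^{⌊t⌋−1} ((X_t − X_{k+1})^{l−1}/(l−1)!)·(X_{k+1} − X_k). -/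
open scoped Nat
open MeasureTheory

/-!
The first sawtooth function is `X t - X 0 + b 1` minus the step function that jumps by
`X (k + 1) - X k` at each integer `k + 1`. Integration against `X'` raises the order of a divided
power `(X t - c) ^ m / m!` by one, up to its value at the left endpoint. The `k`-th step acts only
on `[k + 1, t]`, so after `l - 1` integrations it is a multiple of
`(X t - X (k + 1)) ^ (l - 1) / (l - 1)!`.
-/

section FloorSums

variable {E : Type*} [NormedAddCommGroup E]

theorem intervalIntegrable_indicator {μ : Measure ℝ} {f : ℝ → E} {u v : ℝ} {S : Set ℝ}
    (hf : IntervalIntegrable f μ u v) (hS : MeasurableSet S) :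
    IntervalIntegrable (S.indicator f) μ u v :=
  ⟨hf.1.indicator hS, hf.2.indicator hS⟩

theorem intervalIntegral_indicator_Ici [NormedSpace ℝ E] {μ : Measure ℝ} [NullSingletonClass μ]
    (f : ℝ → E) {a u v : ℝ} (ha : a ∈ Set.Icc u v) :
    ∫ s in u..v, (Set.Ici a).indicator f s ∂μ = ∫ s in a..v, f s ∂μ := by
  have hIoi : (Set.Ici a).indicator f =ᵐ[μ.restrict (Set.Ioc u v)] (Set.Ioi a).indicator f :=
    indicator_ae_eq_of_ae_eq_set (ae_restrict_of_ae Ioi_ae_eq_Ici.symm)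
  rw [intervalIntegral.integral_of_le (ha.1.trans ha.2), intervalIntegral.integral_of_le ha.2,
    integral_congr_ae hIoi, setIntegral_indicator measurableSet_Ioi, Set.Ioc_inter_Ioi,
    sup_eq_right.2 ha.1]

theorem lt_natFloor_iff_add_one_le {R : Type*} [Semiring R] [LinearOrder R]
    [IsStrictOrderedRing R] [FloorSemiring R] {k : ℕ} {s : R} : k < ⌊s⌋₊ ↔ (k : R) + 1 ≤ s := by
  rw [← Nat.add_one_le_iff, Nat.le_floor_iff' k.succ_ne_zero, Nat.cast_add_one]

theorem sum_range_floor_eq_sum_indicator {M : Type*} [AddCommMonoid M] (g : ℕ → ℝ → M) {s t : ℝ}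
    (hst : s ≤ t) :
    ∑ k ∈ Finset.range ⌊s⌋₊, g k s =
      ∑ k ∈ Finset.range ⌊t⌋₊, (Set.Ici ((k : ℝ) + 1)).indicator (g k) s := by
  simp only [Set.indicator_apply, Set.mem_Ici, ← lt_natFloor_iff_add_one_le, ← Finset.sum_filter]
  refine Finset.sum_congr ?_ fun _ _ => rfl
  ext k
  have := Nat.floor_le_floor hst
  simp only [Finset.mem_range, Finset.mem_filter]
  lia

variable {μ : Measure ℝ} {g : ℕ → ℝ → E} {t : ℝ}

theorem intervalIntegrable_sum_range_floor (ht : 0 ≤ t)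
    (hg : ∀ k < ⌊t⌋₊, IntervalIntegrable (g k) μ 0 t) :
    IntervalIntegrable (fun s => ∑ k ∈ Finset.range ⌊s⌋₊, g k s) μ 0 t := by
  have hsum := IntervalIntegrable.sum (Finset.range ⌊t⌋₊) fun k hk =>
    intervalIntegrable_indicator (hg k (Finset.mem_range.1 hk))
      (measurableSet_Ici (a := (k : ℝ) + 1))
  refine hsum.congr fun s hs => ?_
  rw [Set.uIoc_of_le ht] at hs
  rw [Finset.sum_apply, sum_range_floor_eq_sum_indicator g hs.2]

theorem integral_sum_range_floor [NormedSpace ℝ E] [NullSingletonClass μ] (ht : 0 ≤ t)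
    (hg : ∀ k < ⌊t⌋₊, IntervalIntegrable (g k) μ 0 t) :
    ∫ s in (0 : ℝ)..t, ∑ k ∈ Finset.range ⌊s⌋₊, g k s ∂μ =
      ∑ k ∈ Finset.range ⌊t⌋₊, ∫ s in ((k : ℝ) + 1)..t, g k s ∂μ := by
  calc ∫ s in (0 : ℝ)..t, ∑ k ∈ Finset.range ⌊s⌋₊, g k s ∂μ
      = ∫ s in (0 : ℝ)..t,
          ∑ k ∈ Finset.range ⌊t⌋₊, (Set.Ici ((k : ℝ) + 1)).indicator (g k) s ∂μ :=
        intervalIntegral.integral_congr fun s hs =>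
          sum_range_floor_eq_sum_indicator g (Set.uIcc_of_le ht ▸ hs).2
    _ = ∑ k ∈ Finset.range ⌊t⌋₊,
          ∫ s in (0 : ℝ)..t, (Set.Ici ((k : ℝ) + 1)).indicator (g k) s ∂μ :=
        intervalIntegral.integral_finsetSum fun k hk =>
          intervalIntegrable_indicator (hg k (Finset.mem_range.1 hk)) measurableSet_Ici
    _ = ∑ k ∈ Finset.range ⌊t⌋₊, ∫ s in ((k : ℝ) + 1)..t, g k s ∂μ :=
        Finset.sum_congr rfl fun k hk => intervalIntegral_indicator_Ici (g k)
          ⟨by positivity, lt_natFloor_iff_add_one_le.1 (Finset.mem_range.1 hk)⟩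

end FloorSums

section DividedPowers

variable {f : ℝ → ℝ} {a b : ℝ}

theorem absolutelyContinuousOnInterval_pow (hf : AbsolutelyContinuousOnInterval f a b) (m : ℕ) :
    AbsolutelyContinuousOnInterval (fun s => f s ^ m) a b := by
  induction m with
  | zero => simpa only [pow_zero] using contDiffOn_const.absolutelyContinuousOnInterval
  | succ m ih => simpa only [pow_succ] using ih.fun_mul hf

theorem integral_deriv_mul_pow_div_factorial (hf : AbsolutelyContinuousOnInterval f a b) (m : ℕ) :
    ∫ s in a..b, deriv f s * (f s ^ m / m !) =
      f b ^ (m + 1) / (m + 1)! - f a ^ (m + 1) / (m + 1)! := by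
  have hderiv : ∀ᵐ s, s ∈ Set.uIoc a b →
      deriv f s * (f s ^ m / m !) = deriv (fun u => f u ^ (m + 1)) s / (m + 1)! := by
    filter_upwards [hf.ae_differentiableAt] with s hs hmem
    rw [deriv_fun_pow (hs (Set.uIoc_subset_uIcc hmem)), Nat.factorial_succ]
    push_cast
    field_simp
  rw [intervalIntegral.integral_congr_ae hderiv, intervalIntegral.integral_div,
    (absolutelyContinuousOnInterval_pow hf (m + 1)).integral_deriv_eq_sub, sub_div]

end DividedPowers

/-- The level-`m` term of the signature of the one-dimensional path `X` over `[s, t]`, i.e. the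
`m`-fold iterated integral of `X'`, in closed form. -/
noncomputable def signatureTerm (X : ℝ → ℝ) (m : ℕ) (s t : ℝ) : ℝ :=
  (X t - X s) ^ m / m !

/-- The part of the level-`l` sawtooth function produced by the initial data `b`: the solution of
the sawtooth recursion without resets. -/
noncomputable def sawtoothInitialPart (X : ℝ → ℝ) (b : ℕ → ℝ) (l : ℕ) (t : ℝ) : ℝ :=
  ∑ j ∈ Finset.range (l + 1), signatureTerm X (l - j) 0 t * b j

/-- The part of the sawtooth function, to be subtracted from `sawtoothInitialPart`, produced by
resets of size `c k` at the integers `k + 1`. The index `m` counts integrations since the reset, so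
level `l` has `m = l - 1`. -/
noncomputable def sawtoothResetPart (X : ℝ → ℝ) (c : ℕ → ℝ) (m : ℕ) (t : ℝ) : ℝ :=
  ∑ k ∈ Finset.range ⌊t⌋₊, signatureTerm X m (k + 1) t * c k

section Sawtooth

variable {X : ℝ → ℝ} {s t : ℝ}

theorem integral_deriv_mul_signatureTerm (hX : AbsolutelyContinuousOnInterval X s t) (m : ℕ) :
    ∫ u in s..t, deriv X u * signatureTerm X m s u = signatureTerm X (m + 1) s t := by
  have hincr : AbsolutelyContinuousOnInterval (fun u => X u - X s) s t :=
    hX.fun_sub contDiffOn_const.absolutelyContinuousOnInterval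
  simpa only [signatureTerm, deriv_sub_const_fun, sub_self, zero_pow m.succ_ne_zero, zero_div,
    sub_zero] using integral_deriv_mul_pow_div_factorial hincr m

theorem intervalIntegrable_deriv_mul_signatureTerm {a b : ℝ}
    (hX : AbsolutelyContinuousOnInterval X a b) (m : ℕ) (s : ℝ) :
    IntervalIntegrable (fun u => deriv X u * signatureTerm X m s u) volume a b :=
  hX.intervalIntegrable_deriv.mul_continuousOn
    (((hX.continuousOn.sub continuousOn_const).pow m).div_const _)

theorem intervalIntegrable_deriv_mul_sawtoothInitialPart
    (hX : AbsolutelyContinuousOnInterval X 0 t) (b : ℕ → ℝ) (l : ℕ) :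
    IntervalIntegrable (fun u => deriv X u * sawtoothInitialPart X b l u) volume 0 t := by
  simp only [sawtoothInitialPart, Finset.mul_sum, ← mul_assoc]
  simpa only [Finset.sum_fn] using IntervalIntegrable.sum (Finset.range (l + 1)) fun j _ =>
    (intervalIntegrable_deriv_mul_signatureTerm hX (l - j) 0).mul_const (b j)

theorem integral_deriv_mul_sawtoothInitialPart (hX : AbsolutelyContinuousOnInterval X 0 t)
    (b : ℕ → ℝ) (l : ℕ) :
    ∫ u in (0 : ℝ)..t, deriv X u * sawtoothInitialPart X b l u =
      sawtoothInitialPart X b (l + 1) t - b (l + 1) := by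
  have hterm (j : ℕ) := (intervalIntegrable_deriv_mul_signatureTerm hX (l - j) 0).mul_const (b j)
  have hlast : signatureTerm X (l + 1 - (l + 1)) 0 t * b (l + 1) = b (l + 1) := by
    simp [signatureTerm]
  simp only [sawtoothInitialPart, Finset.mul_sum, ← mul_assoc]
  rw [intervalIntegral.integral_finsetSum fun j _ => hterm j, Finset.sum_range_succ _ (l + 1),
    hlast, add_sub_cancel_right]
  refine Finset.sum_congr rfl fun j hj => ?_
  rw [intervalIntegral.integral_mul_const, integral_deriv_mul_signatureTerm hX,
    Nat.sub_add_comm (Finset.mem_range_succ_iff.1 hj)]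

theorem intervalIntegrable_deriv_mul_sawtoothResetPart (ht : 0 ≤ t)
    (hX : AbsolutelyContinuousOnInterval X 0 t) (c : ℕ → ℝ) (m : ℕ) :
    IntervalIntegrable (fun u => deriv X u * sawtoothResetPart X c m u) volume 0 t := by
  simp only [sawtoothResetPart, Finset.mul_sum, ← mul_assoc]
  exact intervalIntegrable_sum_range_floor ht fun k _ =>
    (intervalIntegrable_deriv_mul_signatureTerm hX m _).mul_const (c k)

theorem integral_deriv_mul_sawtoothResetPart (ht : 0 ≤ t)
    (hX : AbsolutelyContinuousOnInterval X 0 t) (c : ℕ → ℝ) (m : ℕ) :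
    ∫ u in (0 : ℝ)..t, deriv X u * sawtoothResetPart X c m u = sawtoothResetPart X c (m + 1) t := by
  simp only [sawtoothResetPart, Finset.mul_sum, ← mul_assoc]
  rw [integral_sum_range_floor ht fun k _ =>
    (intervalIntegrable_deriv_mul_signatureTerm hX m _).mul_const (c k)]
  refine Finset.sum_congr rfl fun k hk => ?_
  have hmem : (k : ℝ) + 1 ∈ Set.uIcc 0 t := Set.mem_uIcc_of_le (by positivity)
    (lt_natFloor_iff_add_one_le.1 (Finset.mem_range.1 hk))
  rw [intervalIntegral.integral_mul_const,
    integral_deriv_mul_signatureTerm (hX.mono (Set.uIcc_subset_uIcc_right hmem))]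

theorem sawtoothInitialPart_sub_sawtoothResetPart_one (X : ℝ → ℝ) {b : ℕ → ℝ} (hb0 : b 0 = 1)
    (ht : 0 ≤ t) :
    sawtoothInitialPart X b 1 t - sawtoothResetPart X (fun k => X (k + 1) - X k) 0 t =
      X t - X (⌊t⌋ : ℝ) + b 1 := by
  have hinit : sawtoothInitialPart X b 1 t = X t - X 0 + b 1 := by
    simp [sawtoothInitialPart, signatureTerm, Finset.sum_range_succ, hb0]
  have hreset : sawtoothResetPart X (fun k => X (k + 1) - X k) 0 t = X (⌊t⌋ : ℝ) - X 0 := by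
    simpa [sawtoothResetPart, signatureTerm, natCast_floor_eq_intCast_floor ht] using
      Finset.sum_range_sub (fun k : ℕ => X k) ⌊t⌋₊
  rw [hinit, hreset]
  ring

theorem sawtoothInitialPart_sub_sawtoothResetPart_succ (ht : 0 ≤ t)
    (hX : AbsolutelyContinuousOnInterval X 0 t) (b c : ℕ → ℝ) (l m : ℕ) :
    sawtoothInitialPart X b (l + 1) t - sawtoothResetPart X c (m + 1) t =
      b (l + 1) + ∫ u in (0 : ℝ)..t,
        deriv X u * (sawtoothInitialPart X b l u - sawtoothResetPart X c m u) := by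
  simp only [mul_sub]
  rw [intervalIntegral.integral_sub (intervalIntegrable_deriv_mul_sawtoothInitialPart hX b l)
    (intervalIntegrable_deriv_mul_sawtoothResetPart ht hX c m),
    integral_deriv_mul_sawtoothInitialPart hX, integral_deriv_mul_sawtoothResetPart ht hX]
  ring

end Sawtooth

theorem forward_sawtooth_explicit_general {T : ℝ} {X : ℝ → ℝ}
    (hX : AbsolutelyContinuousOnInterval X 0 T) {b : ℕ → ℝ} (hb0 : b 0 = 1) {Z : ℕ → ℝ → ℝ}
    (hZ1 : ∀ t ∈ Set.Icc 0 T, Z 1 t = X t - X (⌊t⌋ : ℝ) + b 1)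
    (hZrec : ∀ l, 2 ≤ l → ∀ t ∈ Set.Icc 0 T,
      Z l t = b l + ∫ s in (0 : ℝ)..t, deriv X s * Z (l - 1) s)
    {l : ℕ} (hl : 1 ≤ l) {t : ℝ} (ht : t ∈ Set.Icc 0 T) :
    Z l t =
      (∑ j ∈ Finset.range (l + 1), (X t - X 0) ^ (l - j) / ((l - j)! : ℝ) * b j)
      - ∑ k ∈ Finset.range (⌊t⌋.toNat),
          (X t - X ((k : ℝ) + 1)) ^ (l - 1) / ((l - 1)! : ℝ) * (X ((k : ℝ) + 1) - X (k : ℝ)) := by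
  suffices h : Z l t = sawtoothInitialPart X b l t -
      sawtoothResetPart X (fun k => X (k + 1) - X k) (l - 1) t by
    rwa [Int.floor_toNat]
  induction l, hl using Nat.le_induction generalizing t with
  | base => rw [hZ1 t ht, sawtoothInitialPart_sub_sawtoothResetPart_one X hb0 ht.1]
  | succ l hl ih =>
    obtain ⟨m, rfl⟩ := Nat.exists_eq_add_of_le' hl
    have hXt : AbsolutelyContinuousOnInterval X 0 t :=
      hX.mono (Set.uIcc_subset_uIcc_left (Set.mem_uIcc_of_le ht.1 ht.2))
    rw [hZrec _ (by lia) t ht, Nat.add_sub_cancel (m + 1) 1,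
      sawtoothInitialPart_sub_sawtoothResetPart_succ ht.1 hXt]
    congr 1
    refine intervalIntegral.integral_congr fun s hs => ?_
    rw [Set.uIcc_of_le ht.1] at hs
    exact congrArg (deriv X s * ·) (ih ⟨hs.1, hs.2.trans ht.2⟩)

/-- Explicit formula for the forward sawtooth functions `Z⁺_l` of a one-dimensional path,
in terms of the flip signature (powers of increments) and the initial data `b`. -/
theorem forward_sawtooth_explicit (N : ℕ) (hN : 1 ≤ N) (X : ℝ → ℝ) (hX : ContDiff ℝ 1 X)
    (b : ℕ → ℝ) (hb0 : b 0 = 1) (Z : ℕ → ℝ → ℝ)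
    (hZ1 : ∀ t : ℝ, Z 1 t = X t - X (⌊t⌋ : ℝ) + b 1)
    (hZrec : ∀ l, 2 ≤ l → ∀ t : ℝ,
      Z l t = b l + ∫ s in (0:ℝ)..t, deriv X s * Z (l - 1) s)
    (l : ℕ) (hl : 1 ≤ l) (t : ℝ) (ht : t ∈ Set.Icc (0:ℝ) (N:ℝ)) :
    Z l t =
      (∑ j ∈ Finset.range (l + 1), (X t - X 0) ^ (l - j) / ((l - j)! : ℝ) * b j)
      - ∑ k ∈ Finset.range (⌊t⌋.toNat),
          (X t - X ((k : ℝ) + 1)) ^ (l - 1) / ((l - 1)! : ℝ) * (X ((k : ℝ) + 1) - X (k : ℝ)) :=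
  forward_sawtooth_explicit_general hX.contDiffOn.absolutelyContinuousOnInterval hb0
    (fun t _ => hZ1 t) (fun l hl t _ => hZrec l hl t) hl ht
end

section
/- Let N ≥ 1 be an integer, X : ℝ → ℝ continuously differentiable and constant on [N,∞), and b_0 = 1, b_1, b_2, … real constants. Then for every l ≥ 1 and every t ∈ [0,N], the backward sawtooth function satisfies Z^-_l(t) = Σ_{j=0}^{l} ((X_t − X_0)^{l−j}/(l−j)!)·b_j − Σ_{k=0}^{⌊t⌋} ((X_t − X_k)^{l−1}/(l−1)!)·(X_{k+1} − X_k). -/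
open scoped Nat
open MeasureTheory

/-!
The jumps of the sawtooth function telescope, so `Z⁻₁` is `X - X 0 + b 1` minus a sum, over the
integers `k ≤ t`, of the jumps `X (k + 1) - X k`. Integrating against `deriv X` is linear and, by
the chain rule, raises divided powers `(X t - X c) ^ m / m!` of increments by one degree. A term
born at time `k` only contributes to the integral from time `k` onwards, so it is always an
increment based at `k` that is being raised.
-/

section StepSums

variable {E : Type*} [NormedAddCommGroup E]

lemma intervalIntegrable_indicator_Ici {f : ℝ → E} {a t : ℝ}
    (hf : IntervalIntegrable f volume a t) (c : ℝ) :
    IntervalIntegrable ((Set.Ici c).indicator f) volume a t :=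
  ⟨hf.1.indicator measurableSet_Ici, hf.2.indicator measurableSet_Ici⟩

lemma sum_range_floor_add_one_eq_sum_indicator_Ici {M : Type*} [AddCommMonoid M]
    (f : ℕ → ℝ → M) {s t : ℝ} (hs : 0 ≤ s) (hst : s ≤ t) :
    ∑ k ∈ Finset.range (⌊s⌋₊ + 1), f k s =
      ∑ k ∈ Finset.range (⌊t⌋₊ + 1), (Set.Ici (k : ℝ)).indicator (f k) s := by
  simp only [Set.indicator_apply, ← Finset.sum_filter]
  congr 1
  ext k
  simp only [Finset.mem_filter, Finset.mem_range, Nat.lt_succ_iff, Set.mem_Ici,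
    Nat.le_floor_iff hs, Nat.le_floor_iff (hs.trans hst)]
  exact ⟨fun h => ⟨h.trans hst, h⟩, And.right⟩

lemma intervalIntegrable_sum_range_floor_add_one {f : ℕ → ℝ → E} {t : ℝ} (ht : 0 ≤ t)
    (hf : ∀ k, IntervalIntegrable (f k) volume 0 t) :
    IntervalIntegrable (fun s => ∑ k ∈ Finset.range (⌊s⌋₊ + 1), f k s) volume 0 t := by
  refine (IntervalIntegrable.sum (Finset.range (⌊t⌋₊ + 1)) fun k _ =>
    intervalIntegrable_indicator_Ici (hf k) k).congr fun s hs => ?_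
  rw [Set.uIoc_of_le ht] at hs
  rw [Finset.sum_apply, sum_range_floor_add_one_eq_sum_indicator_Ici f hs.1.le hs.2]

variable [NormedSpace ℝ E]

lemma intervalIntegral_indicator_Ici_s7 (f : ℝ → E) {a c t : ℝ} (hac : a ≤ c) (hct : c ≤ t) :
    ∫ s in a..t, (Set.Ici c).indicator f s = ∫ s in c..t, f s := by
  have hae : (Set.Ici c).indicator f =ᵐ[volume] (Set.Ioi c).indicator f :=
    indicator_ae_eq_of_ae_eq_set Ioi_ae_eq_Ici.symm
  rw [intervalIntegral.integral_congr_ae (hae.mono fun _ hs _ => hs),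
    intervalIntegral.integral_of_le (hac.trans hct), intervalIntegral.integral_of_le hct,
    setIntegral_indicator measurableSet_Ioi, Set.Ioc_inter_Ioi, sup_of_le_right hac]

lemma integral_sum_range_floor_add_one {f : ℕ → ℝ → E} {t : ℝ} (ht : 0 ≤ t)
    (hf : ∀ k, IntervalIntegrable (f k) volume 0 t) :
    ∫ s in 0..t, ∑ k ∈ Finset.range (⌊s⌋₊ + 1), f k s =
      ∑ k ∈ Finset.range (⌊t⌋₊ + 1), ∫ s in (k : ℝ)..t, f k s := by
  have hsum : Set.EqOn (fun s => ∑ k ∈ Finset.range (⌊s⌋₊ + 1), f k s)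
      (fun s => ∑ k ∈ Finset.range (⌊t⌋₊ + 1), (Set.Ici (k : ℝ)).indicator (f k) s)
      (Set.uIcc 0 t) := fun s hs => by
    rw [Set.uIcc_of_le ht] at hs
    exact sum_range_floor_add_one_eq_sum_indicator_Ici f hs.1 hs.2
  rw [intervalIntegral.integral_congr hsum, intervalIntegral.integral_finsetSum
    fun k _ => intervalIntegrable_indicator_Ici (hf k) k]
  refine Finset.sum_congr rfl fun k hk => ?_
  exact intervalIntegral_indicator_Ici_s7 (f k) k.cast_nonneg
    ((Nat.le_floor_iff ht).1 (Nat.lt_succ_iff.1 (Finset.mem_range.1 hk)))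

end StepSums

section Sawtooth

variable {𝕜 : Type*} [RCLike 𝕜] {X : ℝ → 𝕜}

/-- The `m`-th level of the signature of the one-dimensional path `X` over `[c, t]`, that is, the
`m`-fold iterated integral of `dX`, given in closed form as a divided power of the increment. -/
noncomputable def signatureLevel (X : ℝ → 𝕜) (m : ℕ) (c t : ℝ) : 𝕜 :=
  (X t - X c) ^ m / (m ! : 𝕜)

@[simp]
lemma signatureLevel_zero (X : ℝ → 𝕜) (c t : ℝ) : signatureLevel X 0 c t = 1 := by
  simp [signatureLevel]

@[simp]
lemma signatureLevel_one (X : ℝ → 𝕜) (c t : ℝ) : signatureLevel X 1 c t = X t - X c := by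
  simp [signatureLevel]

@[simp]
lemma signatureLevel_succ_self (X : ℝ → 𝕜) (m : ℕ) (c : ℝ) :
    signatureLevel X (m + 1) c c = 0 := by
  simp [signatureLevel]

lemma hasDerivAt_signatureLevel_succ {x' : 𝕜} {t : ℝ} (hX : HasDerivAt X x' t) (m : ℕ) (c : ℝ) :
    HasDerivAt (signatureLevel X (m + 1) c) (x' * signatureLevel X m c t) t := by
  refine (((hX.sub_const (X c)).pow (m + 1)).div_const ((m + 1)! : 𝕜)).congr_deriv ?_
  have hm : (m ! : 𝕜) ≠ 0 := Nat.cast_ne_zero.2 m.factorial_ne_zero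
  have hm' : (m + 1 : 𝕜) ≠ 0 := Nat.cast_add_one_ne_zero m
  simp only [signatureLevel, Nat.factorial_succ, Nat.add_sub_cancel]
  push_cast
  field_simp

lemma intervalIntegrable_deriv_mul_signatureLevel (hX : Differentiable ℝ X)
    (hX' : LocallyIntegrable (deriv X)) (m : ℕ) (c u v : ℝ) :
    IntervalIntegrable (fun s => deriv X s * signatureLevel X m c s) volume u v := by
  have hcont : Continuous (signatureLevel X m c) :=
    ((hX.continuous.sub continuous_const).pow m).div_const _
  exact (hX'.integrableOn_isCompact isCompact_uIcc).intervalIntegrable.mul_continuousOn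
    hcont.continuousOn

lemma integral_deriv_mul_signatureLevel (hX : Differentiable ℝ X)
    (hX' : LocallyIntegrable (deriv X)) (m : ℕ) (c t : ℝ) :
    ∫ s in c..t, deriv X s * signatureLevel X m c s = signatureLevel X (m + 1) c t := by
  rw [intervalIntegral.integral_eq_sub_of_hasDerivAt
    (fun s _ => hasDerivAt_signatureLevel_succ (hX s).hasDerivAt m c)
    (intervalIntegrable_deriv_mul_signatureLevel hX hX' m c c t),
    signatureLevel_succ_self, sub_zero]

/-- The contribution `∑ j ≤ l, X^{(l - j)}_{0,t} b_j` of the initial data to the `l`-th sawtooth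
function, where `X^{(m)}` is the `m`-th signature level. -/
noncomputable def initialDataSum (X : ℝ → 𝕜) (b : ℕ → 𝕜) (l : ℕ) (t : ℝ) : 𝕜 :=
  ∑ j ∈ Finset.range (l + 1), signatureLevel X (l - j) 0 t * b j

/-- The contribution of the jumps at the integers `k ≤ t` to the `(m + 1)`-st backward sawtooth
function. The index is shifted by one to avoid a truncated subtraction. -/
noncomputable def jumpSum (X : ℝ → 𝕜) (m : ℕ) (t : ℝ) : 𝕜 :=
  ∑ k ∈ Finset.range (⌊t⌋₊ + 1), signatureLevel X m k t * (X (k + 1) - X k)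

lemma jumpSum_zero (X : ℝ → 𝕜) (t : ℝ) : jumpSum X 0 t = X (⌊t⌋₊ + 1) - X 0 := by
  simpa [jumpSum] using Finset.sum_range_sub (fun k : ℕ => X k) (⌊t⌋₊ + 1)

lemma deriv_mul_initialDataSum (X : ℝ → 𝕜) (b : ℕ → 𝕜) (l : ℕ) (s : ℝ) :
    deriv X s * initialDataSum X b l s =
      ∑ j ∈ Finset.range (l + 1), deriv X s * signatureLevel X (l - j) 0 s * b j := by
  simp only [initialDataSum, Finset.mul_sum, mul_assoc]

lemma deriv_mul_jumpSum (X : ℝ → 𝕜) (m : ℕ) (s : ℝ) :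
    deriv X s * jumpSum X m s =
      ∑ k ∈ Finset.range (⌊s⌋₊ + 1),
        deriv X s * signatureLevel X m k s * (X (k + 1) - X k) := by
  simp only [jumpSum, Finset.mul_sum, mul_assoc]

lemma intervalIntegrable_deriv_mul_initialDataSum (hX : Differentiable ℝ X)
    (hX' : LocallyIntegrable (deriv X)) (b : ℕ → 𝕜) (l : ℕ) (u v : ℝ) :
    IntervalIntegrable (fun s => deriv X s * initialDataSum X b l s) volume u v := by
  simp only [deriv_mul_initialDataSum]
  simpa only [Finset.sum_fn] using IntervalIntegrable.sum (Finset.range (l + 1)) fun j _ =>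
    (intervalIntegrable_deriv_mul_signatureLevel hX hX' (l - j) 0 u v).mul_const (b j)

lemma intervalIntegrable_deriv_mul_jumpSum (hX : Differentiable ℝ X)
    (hX' : LocallyIntegrable (deriv X)) (m : ℕ) {t : ℝ} (ht : 0 ≤ t) :
    IntervalIntegrable (fun s => deriv X s * jumpSum X m s) volume 0 t := by
  simp only [deriv_mul_jumpSum]
  exact intervalIntegrable_sum_range_floor_add_one ht fun k =>
    (intervalIntegrable_deriv_mul_signatureLevel hX hX' m k 0 t).mul_const _

lemma initialDataSum_succ (hX : Differentiable ℝ X) (hX' : LocallyIntegrable (deriv X))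
    (b : ℕ → 𝕜) (l : ℕ) (t : ℝ) :
    initialDataSum X b (l + 1) t =
      b (l + 1) + ∫ s in 0..t, deriv X s * initialDataSum X b l s := by
  simp only [deriv_mul_initialDataSum]
  rw [intervalIntegral.integral_finsetSum fun j _ =>
      (intervalIntegrable_deriv_mul_signatureLevel hX hX' (l - j) 0 0 t).mul_const (b j),
    initialDataSum, Finset.sum_range_succ, Nat.sub_self, signatureLevel_zero, one_mul, add_comm]
  congr 1
  refine Finset.sum_congr rfl fun j hj => ?_
  rw [intervalIntegral.integral_mul_const, integral_deriv_mul_signatureLevel hX hX',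
    Nat.sub_add_comm (Nat.lt_succ_iff.1 (Finset.mem_range.1 hj))]

lemma jumpSum_succ (hX : Differentiable ℝ X) (hX' : LocallyIntegrable (deriv X))
    (m : ℕ) {t : ℝ} (ht : 0 ≤ t) :
    jumpSum X (m + 1) t = ∫ s in 0..t, deriv X s * jumpSum X m s := by
  simp only [deriv_mul_jumpSum]
  rw [integral_sum_range_floor_add_one ht fun k =>
    (intervalIntegrable_deriv_mul_signatureLevel hX hX' m k 0 t).mul_const _]
  simp only [jumpSum, intervalIntegral.integral_mul_const,
    integral_deriv_mul_signatureLevel hX hX']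

end Sawtooth

theorem backward_sawtooth_explicit_general {𝕜 : Type*} [RCLike 𝕜] {X : ℝ → 𝕜}
    (hX : Differentiable ℝ X) (hX' : LocallyIntegrable (deriv X))
    {b : ℕ → 𝕜} (hb0 : b 0 = 1) {Z : ℕ → ℝ → 𝕜}
    (hZ1 : ∀ t : ℝ, 0 ≤ t → Z 1 t = X t - X ((⌊t⌋ : ℝ) + 1) + b 1)
    (hZrec : ∀ l, 2 ≤ l → ∀ t : ℝ, 0 ≤ t →
      Z l t = b l + ∫ s in (0:ℝ)..t, deriv X s * Z (l - 1) s)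
    {l : ℕ} (hl : 1 ≤ l) {t : ℝ} (ht : 0 ≤ t) :
    Z l t = initialDataSum X b l t - jumpSum X (l - 1) t := by
  induction l, hl using Nat.le_induction generalizing t with
  | base =>
    rw [hZ1 t ht, jumpSum_zero, natCast_floor_eq_intCast_floor ht]
    simp only [initialDataSum, Finset.sum_range_succ, Finset.sum_range_zero, Nat.sub_zero,
      Nat.sub_self, signatureLevel_zero, signatureLevel_one, hb0]
    ring
  | succ l hl ih =>
    obtain ⟨m, rfl⟩ := Nat.exists_eq_add_of_le' hl
    have hintegrand : Set.EqOn (fun s => deriv X s * Z (m + 1) s)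
        (fun s => deriv X s * initialDataSum X b (m + 1) s - deriv X s * jumpSum X m s)
        (Set.uIcc 0 t) := fun s hs => by
      rw [Set.uIcc_of_le ht] at hs
      simp only [ih hs.1, Nat.add_sub_cancel, mul_sub]
    rw [hZrec _ (by lia) t ht, Nat.add_sub_cancel, intervalIntegral.integral_congr hintegrand,
      intervalIntegral.integral_sub
        (intervalIntegrable_deriv_mul_initialDataSum hX hX' b (m + 1) 0 t)
        (intervalIntegrable_deriv_mul_jumpSum hX hX' m ht),
      initialDataSum_succ hX hX', jumpSum_succ hX hX' m ht, add_sub_assoc]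

/-- Explicit formula for the backward sawtooth functions `Z⁻_l` of a one-dimensional path,
in terms of the flip signature (powers of increments) and the initial data `b`. -/
theorem backward_sawtooth_explicit (N : ℕ) (hN : 1 ≤ N) (X : ℝ → ℝ) (hX : ContDiff ℝ 1 X)
    (hXN : ∀ u : ℝ, (N : ℝ) ≤ u → X u = X (N : ℝ))
    (b : ℕ → ℝ) (hb0 : b 0 = 1) (Z : ℕ → ℝ → ℝ)
    (hZ1 : ∀ t : ℝ, Z 1 t = X t - X ((⌊t⌋ : ℝ) + 1) + b 1)
    (hZrec : ∀ l, 2 ≤ l → ∀ t : ℝ,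
      Z l t = b l + ∫ s in (0:ℝ)..t, deriv X s * Z (l - 1) s)
    (l : ℕ) (hl : 1 ≤ l) (t : ℝ) (ht : t ∈ Set.Icc (0:ℝ) (N:ℝ)) :
    Z l t =
      (∑ j ∈ Finset.range (l + 1), (X t - X 0) ^ (l - j) / ((l - j)! : ℝ) * b j)
      - ∑ k ∈ Finset.range (⌊t⌋.toNat + 1),
          (X t - X (k : ℝ)) ^ (l - 1) / ((l - 1)! : ℝ) * (X ((k : ℝ) + 1) - X (k : ℝ)) := by
  rw [Int.floor_toNat]
  exact backward_sawtooth_explicit_general (hX.differentiable one_ne_zero)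
    (hX.continuous_deriv le_rfl).locallyIntegrable hb0 (fun u _ => hZ1 u)
    (fun n hn u _ => hZrec n hn u) hl ht.1
end

section
/- Let N ≥ 1 and m ≥ 2 be integers, let X : ℝ → ℝ be continuously differentiable and constant on (−∞,0] and on [N,∞), let b_0 = 1, b_1,…,b_m ∈ ℝ, and let Y^0, Y^1, …, Y^m : [0,N] → ℝ be continuous functions satisfying Y^k(t) = Y^k(0) + ∫_0^t Y^{k+1}(s)·X'(s) ds for all 0 ≤ k ≤ m−1 (a controlled integrand of X). Then the forward preliminary Euler–Maclaurin formula holds: Σ_{k=0}^{N−1} Y^0(k+1)·(X_{k+1} − X_k) = ∫_0^N Y^0(t)·X'(t) dt − b_1·(Y^0(N) − Y^0(0)) + Σ_{l=2}^{m} (−1)^l·(Y^{l−1}(N)·Z^+_l(N) − Y^{l−1}(0)·Z^+_l(0)) + (−1)^{m+1}·∫_0^N Y^m(t)·Z^+_m(t)·X'(t) dt. -/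
open scoped Nat
open MeasureTheory

/-!
On each cell `[k, k + 1]`, integrate the primitive `X t - X k + b 1` of `X'` by parts against `Y 0`:
the boundary terms are `(X (k + 1) - X k) Y 0 (k + 1)` and an increment of `b 1 * Y 0`, which
telescopes, and the remaining integral is that of `Y 1 X'` against the first sawtooth `Z 1`.
The later sawtooths have no jumps: `Z (l + 1)` is a primitive of `X' Z l` on the whole of `[0, N]`,
as `Y l` is of `Y (l + 1) X'`, so integrating by parts globally raises `l` by one and flips the sign
of the remainder.
-/

section EulerMaclaurin

variable {E : Type*} [NormedAddCommGroup E] [NormedSpace ℝ E]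

/-- `F` is, on the interval with endpoints `a` and `b`, a primitive of the interval integrable
function `f`. Stating this through the integral, rather than through derivatives, makes it apply to
sawtooth functions, whose derivatives jump. -/
structure IsIntervalPrimitive (F f : ℝ → E) (a b : ℝ) : Prop where
  intervalIntegrable : IntervalIntegrable f volume a b
  eq_add_integral : ∀ t ∈ Set.uIcc a b, F t = F a + ∫ s in a..t, f s

namespace IsIntervalPrimitive

variable {F f : ℝ → E} {a b : ℝ}

theorem of_eq_const_add_integral {c : E} (hf : IntervalIntegrable f volume a b)
    (hF : ∀ t ∈ Set.uIcc a b, F t = c + ∫ s in a..t, f s) : IsIntervalPrimitive F f a b where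
  intervalIntegrable := hf
  eq_add_integral t ht := by
    rw [hF t ht, hF a Set.left_mem_uIcc, intervalIntegral.integral_same, add_zero]

theorem of_differentiableAt [CompleteSpace E] (hF : ∀ t ∈ Set.uIcc a b, DifferentiableAt ℝ F t)
    (hF' : IntervalIntegrable (deriv F) volume a b) : IsIntervalPrimitive F (deriv F) a b where
  intervalIntegrable := hF'
  eq_add_integral t ht := by
    have hsub : Set.uIcc a t ⊆ Set.uIcc a b := Set.uIcc_subset_uIcc_left ht
    rw [intervalIntegral.integral_deriv_eq_sub (fun s hs => hF s (hsub hs)) (hF'.mono_set hsub),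
      add_sub_cancel]

theorem continuousOn (hF : IsIntervalPrimitive F f a b) : ContinuousOn F (Set.uIcc a b) :=
  (continuousOn_const.add (intervalIntegral.continuousOn_primitive_interval'
    hF.intervalIntegrable Set.left_mem_uIcc)).congr hF.eq_add_integral

theorem integral_eq_sub (hF : IsIntervalPrimitive F f a b) {s t : ℝ} (hs : s ∈ Set.uIcc a b)
    (ht : t ∈ Set.uIcc a b) : ∫ u in s..t, f u = F t - F s := by
  rw [← intervalIntegral.integral_interval_sub_left
      (hF.intervalIntegrable.mono_set (Set.uIcc_subset_uIcc_left ht))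
      (hF.intervalIntegrable.mono_set (Set.uIcc_subset_uIcc_left hs)),
    hF.eq_add_integral t ht, hF.eq_add_integral s hs, add_sub_add_left_eq_sub]

theorem mono (hF : IsIntervalPrimitive F f a b) {c d : ℝ} (h : Set.uIcc c d ⊆ Set.uIcc a b) :
    IsIntervalPrimitive F f c d where
  intervalIntegrable := hF.intervalIntegrable.mono_set h
  eq_add_integral t ht := by
    rw [hF.integral_eq_sub (h Set.left_mem_uIcc) (h ht), add_sub_cancel]

theorem add_const (hF : IsIntervalPrimitive F f a b) (c : E) :
    IsIntervalPrimitive (fun t => F t + c) f a b where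
  intervalIntegrable := hF.intervalIntegrable
  eq_add_integral t ht := by rw [hF.eq_add_integral t ht, add_right_comm]

theorem continuousLinearMap_comp [CompleteSpace E] {G : Type*} [NormedAddCommGroup G]
    [NormedSpace ℝ G] [CompleteSpace G] (L : E →L[ℝ] G) (hF : IsIntervalPrimitive F f a b) :
    IsIntervalPrimitive (fun t => L (F t)) (fun t => L (f t)) a b where
  intervalIntegrable :=
    ⟨L.integrable_comp hF.intervalIntegrable.1, L.integrable_comp hF.intervalIntegrable.2⟩
  eq_add_integral t ht := by
    rw [L.intervalIntegral_comp_comm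
      (hF.intervalIntegrable.mono_set (Set.uIcc_subset_uIcc_left ht)), ← map_add,
      ← hF.eq_add_integral t ht]

theorem integral_mul_eq_sub {F f G g : ℝ → ℝ} (hF : IsIntervalPrimitive F f a b)
    (hG : IsIntervalPrimitive G g a b) :
    ∫ t in a..b, F t * g t = F b * G b - F a * G a - ∫ t in a..b, f t * G t := by
  have ac_integral {h : ℝ → ℝ} (hh : IntervalIntegrable h volume a b) (c : ℝ) :
      AbsolutelyContinuousOnInterval (fun t => c + ∫ s in a..t, h s) a b :=
    ((LipschitzWith.const c).lipschitzOnWith.absolutelyContinuousOnInterval).fun_add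
      (hh.absolutelyContinuousOnInterval_intervalIntegral Set.left_mem_uIcc)
  have ae_deriv {h : ℝ → ℝ} (hh : IntervalIntegrable h volume a b) (c : ℝ) :
      ∀ᵐ t, t ∈ Set.uIoc a b → deriv (fun t => c + ∫ s in a..t, h s) t = h t := by
    filter_upwards [hh.ae_hasDerivAt_integral] with t ht hmem
    exact ((ht (Set.uIoc_subset_uIcc hmem) a Set.left_mem_uIcc).const_add c).deriv
  have hparts := (ac_integral hF.intervalIntegrable (F a)).integral_mul_deriv_eq_deriv_mul
    (ac_integral hG.intervalIntegrable (G a))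
  rw [← hF.eq_add_integral b Set.right_mem_uIcc, ← hG.eq_add_integral b Set.right_mem_uIcc,
    ← hF.eq_add_integral a Set.left_mem_uIcc, ← hG.eq_add_integral a Set.left_mem_uIcc] at hparts
  have hleft : ∫ t in a..b, F t * g t = ∫ t in a..b, (F a + ∫ s in a..t, f s) *
      deriv (fun t => G a + ∫ s in a..t, g s) t := by
    refine intervalIntegral.integral_congr_ae ?_
    filter_upwards [ae_deriv hG.intervalIntegrable (G a)] with t ht hmem
    rw [ht hmem, ← hF.eq_add_integral t (Set.uIoc_subset_uIcc hmem)]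
  have hright : ∫ t in a..b, f t * G t = ∫ t in a..b,
      deriv (fun t => F a + ∫ s in a..t, f s) t * (G a + ∫ s in a..t, g s) := by
    refine intervalIntegral.integral_congr_ae ?_
    filter_upwards [ae_deriv hF.intervalIntegrable (F a)] with t ht hmem
    rw [ht hmem, ← hG.eq_add_integral t (Set.uIoc_subset_uIcc hmem)]
  rw [hleft, hright, hparts]

theorem integral_smul_eq_sub [CompleteSpace E] {F f : ℝ → ℝ} {G g : ℝ → E}
    (hF : IsIntervalPrimitive F f a b) (hG : IsIntervalPrimitive G g a b) :
    ∫ t in a..b, F t • g t = F b • G b - F a • G a - ∫ t in a..b, f t • G t := by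
  -- Continuous functionals separate points, so the scalar case suffices.
  refine (SeparatingDual.eq_iff_forall_dual_eq (R := ℝ)).mpr fun L => ?_
  have hparts := hF.integral_mul_eq_sub (hG.continuousLinearMap_comp L)
  rw [map_sub, map_sub, ← L.intervalIntegral_comp_comm
      (hG.intervalIntegrable.continuousOn_smul hF.continuousOn),
    ← L.intervalIntegral_comp_comm (hF.intervalIntegrable.smul_continuousOn hG.continuousOn)]
  simpa only [map_smul, smul_eq_mul] using hparts

theorem sub_smul_eq_integral_add_integral [CompleteSpace E] {X x : ℝ → ℝ} {Y y : ℝ → E}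
    (hX : IsIntervalPrimitive X x a b) (hY : IsIntervalPrimitive Y y a b) (c : ℝ) :
    (X b - X a) • Y b = (∫ t in a..b, x t • Y t) - c • (Y b - Y a) +
      ∫ t in a..b, (X t - X a + c) • y t := by
  have hparts := (hX.add_const (c - X a)).integral_smul_eq_sub hY
  simp only [← add_sub_assoc, add_sub_right_comm] at hparts
  rw [hparts]
  module

end IsIntervalPrimitive

theorem intFloor_eq_natCast_of_mem_Ioo {k : ℕ} {t : ℝ}
    (ht : t ∈ Set.Ioo (k : ℝ) ((k + 1 : ℕ) : ℝ)) : ⌊t⌋ = (k : ℤ) :=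
  Int.floor_eq_iff.mpr ⟨by exact_mod_cast ht.1.le, by simpa using ht.2⟩

theorem uIcc_natCast_succ_subset {k N : ℕ} (hk : k < N) :
    Set.uIcc (k : ℝ) ((k + 1 : ℕ) : ℝ) ⊆ Set.uIcc 0 (N : ℝ) :=
  Set.uIcc_subset_uIcc (Set.mem_uIcc_of_le k.cast_nonneg (by exact_mod_cast hk.le))
    (Set.mem_uIcc_of_le (Nat.cast_nonneg _) (by exact_mod_cast hk))

theorem intervalIntegrable_sub_comp_floor_smul {X : ℝ → ℝ} {y : ℝ → E} {N : ℕ}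
    (hX : ContinuousOn X (Set.uIcc 0 (N : ℝ))) (hy : IntervalIntegrable y volume 0 N) (c : ℝ) :
    IntervalIntegrable (fun t => (X t - X (⌊t⌋ : ℝ) + c) • y t) volume 0 N := by
  have hcell : ∀ k < N, IntervalIntegrable (fun t => (X t - X (⌊t⌋ : ℝ) + c) • y t) volume
      ((k : ℕ) : ℝ) ((k + 1 : ℕ) : ℝ) := fun k hk => by
    have hsub := uIcc_natCast_succ_subset hk
    have hcont : ContinuousOn (fun t => X t - X k + c) (Set.uIcc (k : ℝ) ((k + 1 : ℕ) : ℝ)) :=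
      ((hX.mono hsub).sub continuousOn_const).add continuousOn_const
    refine ((hy.mono_set hsub).continuousOn_smul hcont).congr_uIoo fun t ht => ?_
    rw [Set.uIoo_of_le (Nat.cast_le.mpr k.le_succ)] at ht
    simp only [intFloor_eq_natCast_of_mem_Ioo ht, Int.cast_natCast]
  exact_mod_cast IntervalIntegrable.trans_iterate (a := fun k : ℕ => (k : ℝ)) hcell

theorem sum_sub_smul_eq_integral_add_integral_sub_comp_floor [CompleteSpace E] {X x : ℝ → ℝ}
    {Y y : ℝ → E} {N : ℕ} (hX : IsIntervalPrimitive X x 0 N) (hY : IsIntervalPrimitive Y y 0 N)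
    (c : ℝ) :
    ∑ k ∈ Finset.range N, (X ((k : ℝ) + 1) - X k) • Y ((k : ℝ) + 1) =
      (∫ t in (0 : ℝ)..N, x t • Y t) - c • (Y N - Y 0) +
        ∫ t in (0 : ℝ)..N, (X t - X (⌊t⌋ : ℝ) + c) • y t := by
  have hcell : ∀ k ∈ Finset.range N, (X ((k : ℝ) + 1) - X k) • Y ((k : ℝ) + 1) =
      (∫ t in (k : ℝ)..((k + 1 : ℕ) : ℝ), x t • Y t) - c • (Y ((k + 1 : ℕ) : ℝ) - Y k) +
        ∫ t in (k : ℝ)..((k + 1 : ℕ) : ℝ), (X t - X (⌊t⌋ : ℝ) + c) • y t := fun k hk => by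
    have hsub := uIcc_natCast_succ_subset (Finset.mem_range.mp hk)
    have hfloor : ∫ t in (k : ℝ)..((k + 1 : ℕ) : ℝ), (X t - X (⌊t⌋ : ℝ) + c) • y t =
        ∫ t in (k : ℝ)..((k + 1 : ℕ) : ℝ), (X t - X k + c) • y t :=
      intervalIntegral.integral_congr_Ioo_of_le (Nat.cast_le.mpr k.le_succ) fun t ht => by
        simp only [intFloor_eq_natCast_of_mem_Ioo ht, Int.cast_natCast]
    rw [hfloor, ← (hX.mono hsub).sub_smul_eq_integral_add_integral (hY.mono hsub) c,
      Nat.cast_succ]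
  have hsum_integral {f : ℝ → E} (hf : IntervalIntegrable f volume 0 N) :
      ∑ k ∈ Finset.range N, ∫ t in (k : ℝ)..((k + 1 : ℕ) : ℝ), f t = ∫ t in (0 : ℝ)..N, f t := by
    exact_mod_cast intervalIntegral.sum_integral_adjacent_intervals (a := fun k : ℕ => (k : ℝ))
      fun k hk => hf.mono_set (uIcc_natCast_succ_subset hk)
  rw [Finset.sum_congr rfl hcell, Finset.sum_add_distrib, Finset.sum_sub_distrib,
    ← Finset.smul_sum, Finset.sum_range_sub (fun k : ℕ => Y k), Nat.cast_zero,
    hsum_integral (hX.intervalIntegrable.smul_continuousOn hY.continuousOn),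
    hsum_integral (intervalIntegrable_sub_comp_floor_smul hX.continuousOn hY.intervalIntegrable c)]

/-- `Z 1, Z 2, …` are, on the interval with endpoints `0` and `T`, the forward sawtooth functions
`Z⁺_l` of a path `X` with derivative `x` and initial data `b`. The recursion is stated for `l + 1`
instead of `l ≥ 2`, and `Z 0` is left unconstrained. -/
structure IsForwardSawtooth (X x : ℝ → ℝ) (b : ℕ → ℝ) (Z : ℕ → ℝ → ℝ) (T : ℝ) : Prop where
  one_eq : ∀ t ∈ Set.uIcc 0 T, Z 1 t = X t - X (⌊t⌋ : ℝ) + b 1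
  succ_eq : ∀ l, 1 ≤ l → ∀ t ∈ Set.uIcc 0 T,
    Z (l + 1) t = b (l + 1) + ∫ s in (0 : ℝ)..t, x s * Z l s

theorem IsForwardSawtooth.isIntervalPrimitive {X x : ℝ → ℝ} {b : ℕ → ℝ} {Z : ℕ → ℝ → ℝ} {N : ℕ}
    (hZ : IsForwardSawtooth X x b Z N) (hX : IsIntervalPrimitive X x 0 N) {l : ℕ} (hl : 1 ≤ l) :
    IsIntervalPrimitive (Z (l + 1)) (fun t => x t * Z l t) 0 N := by
  refine .of_eq_const_add_integral ?_ (hZ.succ_eq l hl)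
  induction l, hl using Nat.le_induction with
  | base =>
    refine (intervalIntegrable_sub_comp_floor_smul hX.continuousOn hX.intervalIntegrable
      (b 1)).congr_uIoo fun t ht => ?_
    simp only [hZ.one_eq t (Set.uIoo_subset_uIcc_self ht), smul_eq_mul, mul_comm]
  | succ l hl ih =>
    exact hX.intervalIntegrable.mul_continuousOn
      (IsIntervalPrimitive.of_eq_const_add_integral ih (hZ.succ_eq l hl)).continuousOn

/-- `Y 0, …, Y m` is, on the interval with endpoints `a` and `b`, a controlled integrand of a path
with derivative `x`: `dY^k = Y^{k+1} dX` for `k < m`. -/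
def IsControlledIntegrand (x : ℝ → ℝ) (Y : ℕ → ℝ → E) (m : ℕ) (a b : ℝ) : Prop :=
  ∀ k < m, IsIntervalPrimitive (Y k) (fun t => x t • Y (k + 1) t) a b

theorem IsControlledIntegrand.of_continuousOn {x : ℝ → ℝ} {Y : ℕ → ℝ → E} {m : ℕ} {a b : ℝ}
    (hx : ContinuousOn x (Set.uIcc a b))
    (hYcont : ∀ k < m, ContinuousOn (Y (k + 1)) (Set.uIcc a b))
    (hY : ∀ k < m, ∀ t ∈ Set.uIcc a b, Y k t = Y k a + ∫ s in a..t, x s • Y (k + 1) s) :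
    IsControlledIntegrand x Y m a b :=
  fun k hk => ⟨(hx.smul (hYcont k hk)).intervalIntegrable, hY k hk⟩

variable [CompleteSpace E] {N m : ℕ} {X x : ℝ → ℝ} {b : ℕ → ℝ} {Z : ℕ → ℝ → ℝ} {Y : ℕ → ℝ → E}

theorem integral_forwardSawtooth_smul_eq_sub (hX : IsIntervalPrimitive X x 0 N)
    (hZ : IsForwardSawtooth X x b Z N) (hY : IsControlledIntegrand x Y m 0 N) {l : ℕ}
    (hl : 1 ≤ l) (hlm : l < m) :
    ∫ t in (0 : ℝ)..N, (x t * Z l t) • Y l t =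
      (Z (l + 1) N • Y l N - Z (l + 1) 0 • Y l 0) -
        ∫ t in (0 : ℝ)..N, (x t * Z (l + 1) t) • Y (l + 1) t := by
  have hparts := (hZ.isIntervalPrimitive hX hl).integral_smul_eq_sub (hY l hlm)
  simp only [smul_smul, mul_comm (Z (l + 1) _)] at hparts
  rw [hparts, sub_sub_cancel]

theorem integral_forwardSawtooth_one_smul_eq_sum_add (hX : IsIntervalPrimitive X x 0 N)
    (hZ : IsForwardSawtooth X x b Z N) (hm : 1 ≤ m) (hY : IsControlledIntegrand x Y m 0 N) :
    ∫ t in (0 : ℝ)..N, (x t * Z 1 t) • Y 1 t =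
      (∑ l ∈ Finset.Icc 2 m, (-1 : ℝ) ^ l • (Z l N • Y (l - 1) N - Z l 0 • Y (l - 1) 0)) +
      (-1 : ℝ) ^ (m + 1) • ∫ t in (0 : ℝ)..N, (x t * Z m t) • Y m t := by
  induction m, hm using Nat.le_induction with
  | base => simp
  | succ n hn ih =>
    rw [ih fun k hk => hY k (hk.trans n.lt_succ_self),
      integral_forwardSawtooth_smul_eq_sub hX hZ hY hn n.lt_succ_self,
      Finset.sum_Icc_succ_top (by omega), Nat.add_sub_cancel]
    module

theorem forward_preliminary_euler_maclaurin_general (hm : 1 ≤ m)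
    (hX : IsIntervalPrimitive X x 0 N) (hZ : IsForwardSawtooth X x b Z N)
    (hY : IsControlledIntegrand x Y m 0 N) :
    ∑ k ∈ Finset.range N, (X ((k : ℝ) + 1) - X k) • Y 0 ((k : ℝ) + 1) =
      (∫ t in (0 : ℝ)..N, x t • Y 0 t) - b 1 • (Y 0 N - Y 0 0) +
      (∑ l ∈ Finset.Icc 2 m, (-1 : ℝ) ^ l • (Z l N • Y (l - 1) N - Z l 0 • Y (l - 1) 0)) +
      (-1 : ℝ) ^ (m + 1) • ∫ t in (0 : ℝ)..N, (x t * Z m t) • Y m t := by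
  rw [sum_sub_smul_eq_integral_add_integral_sub_comp_floor hX (hY 0 hm) (b 1), add_assoc,
    ← integral_forwardSawtooth_one_smul_eq_sum_add hX hZ hm hY]
  congr 1
  refine intervalIntegral.integral_congr fun t ht => ?_
  simp only [hZ.one_eq t ht, smul_smul, mul_comm (x t)]

end EulerMaclaurin

/-- Forward preliminary Euler–Maclaurin formula for Riemann–Stieltjes sums of a
controlled integrand `Y` along a one-dimensional path `X`, with forward sawtooth
functions `Z⁺_l` built from initial data `b`. -/
theorem forward_preliminary_euler_maclaurin (N m : ℕ) (hN : 1 ≤ N) (hm : 2 ≤ m)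
    (X : ℝ → ℝ) (hX : ContDiff ℝ 1 X)
    (hX0 : ∀ u : ℝ, u ≤ 0 → X u = X 0)
    (hXN : ∀ u : ℝ, (N : ℝ) ≤ u → X u = X (N : ℝ))
    (b : ℕ → ℝ) (hb0 : b 0 = 1)
    (Z : ℕ → ℝ → ℝ)
    (hZ1 : ∀ t : ℝ, Z 1 t = X t - X (⌊t⌋ : ℝ) + b 1)
    (hZrec : ∀ l, 2 ≤ l → ∀ t : ℝ,
      Z l t = b l + ∫ s in (0:ℝ)..t, deriv X s * Z (l - 1) s)
    (Y : ℕ → ℝ → ℝ)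
    (hYcont : ∀ k, k ≤ m → ContinuousOn (Y k) (Set.Icc 0 (N : ℝ)))
    (hYctrl : ∀ k, k ≤ m - 1 → ∀ t ∈ Set.Icc (0:ℝ) (N:ℝ),
      Y k t = Y k 0 + ∫ s in (0:ℝ)..t, Y (k + 1) s * deriv X s) :
    ∑ k ∈ Finset.range N, Y 0 ((k : ℝ) + 1) * (X ((k : ℝ) + 1) - X (k : ℝ)) =
      (∫ t in (0:ℝ)..(N:ℝ), Y 0 t * deriv X t)
      - b 1 * (Y 0 (N : ℝ) - Y 0 0)
      + (∑ l ∈ Finset.Icc 2 m,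
          (-1 : ℝ) ^ l * (Y (l - 1) (N : ℝ) * Z l (N : ℝ) - Y (l - 1) 0 * Z l 0))
      + (-1 : ℝ) ^ (m + 1) * ∫ t in (0:ℝ)..(N:ℝ), Y m t * Z m t * deriv X t := by
  rw [← Set.uIcc_of_le (Nat.cast_nonneg (α := ℝ) N)] at hYcont hYctrl
  have hdX : Continuous (deriv X) := hX.continuous_deriv le_rfl
  have hprimitive : IsIntervalPrimitive X (deriv X) 0 N :=
    .of_differentiableAt (fun t _ => hX.differentiable one_ne_zero t) (hdX.intervalIntegrable _ _)
  have hsawtooth : IsForwardSawtooth X (deriv X) b Z N :=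
    ⟨fun t _ => hZ1 t, fun l hl t _ => hZrec (l + 1) (by omega) t⟩
  have hcontrolled : IsControlledIntegrand (deriv X) Y m 0 N :=
    .of_continuousOn hdX.continuousOn (fun k hk => hYcont (k + 1) hk) fun k hk => by
      simpa only [smul_eq_mul, mul_comm] using hYctrl k (by omega)
  simpa only [smul_eq_mul, mul_comm, mul_left_comm] using
    forward_preliminary_euler_maclaurin_general (by omega) hprimitive hsawtooth hcontrolled
end

section
/- Let N ≥ 1 and m ≥ 2 be integers, let X : ℝ → ℝ be continuously differentiable and constant on (−∞,0] and on [N,∞), let b_0 = 1, b_1,…,b_m ∈ ℝ, and let Y^0, Y^1, …, Y^m : [0,N] → ℝ be continuous functions satisfying Y^k(t) = Y^k(0) + ∫_0^t Y^{k+1}(s)·X'(s) ds for all 0 ≤ k ≤ m−1 (a controlled integrand of X). Then the backward preliminary Euler–Maclaurin formula holds: Σ_{k=0}^{N−1} Y^0(k)·(X_{k+1} − X_k) = ∫_0^N Y^0(t)·X'(t) dt − b_1·(Y^0(N) − Y^0(0)) + Σ_{l=2}^{m} (−1)^l·(Y^{l−1}(N)·Z^-_l(N) − Y^{l−1}(0)·Z^-_l(0))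 + (−1)^{m+1}·∫_0^N Y^m(t)·Z^-_m(t)·X'(t) dt. -/
open scoped Nat
open MeasureTheory

/-!
On each interval `[k, k + 1]`, integrating `Y 0` by parts against the primitive
`X t - X (k + 1) + b 1` of `X'` gives the formula of order one: the Riemann–Stieltjes sum is the
integral of `Y 0` plus a boundary term and a remainder `∫ Y 1 * Z 1 * X'`. Since `Y k` is a
primitive of `Y (k + 1) * X'` and `Z (l + 1)` is one of `X' * Z l`, each further integration by
parts on the whole of `[0, N]` raises both indices in the remainder by one and changes its sign.
-/

/-- `f` is an absolutely continuous primitive of `f'` on the interval with endpoints `a` and `b`,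
in any order. It expresses the controlled integrand and sawtooth relations, and requires the
integrability of `f'`, so that the integrals are never junk values. -/
structure IsPrimitiveOn {E : Type*} [NormedAddCommGroup E] [NormedSpace ℝ E]
    (f f' : ℝ → E) (a b : ℝ) : Prop where
  intervalIntegrable : IntervalIntegrable f' volume a b
  integral_eq_sub : ∀ s ∈ Set.uIcc a b, ∀ t ∈ Set.uIcc a b, ∫ u in s..t, f' u = f t - f s

namespace IsPrimitiveOn

section NormedSpace

variable {E : Type*} [NormedAddCommGroup E] [NormedSpace ℝ E] {f f' : ℝ → E} {a b : ℝ}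

theorem of_eq_const_add_integral (c : E) (hf' : IntervalIntegrable f' volume a b)
    (hf : ∀ t ∈ Set.uIcc a b, f t = c + ∫ u in a..t, f' u) : IsPrimitiveOn f f' a b where
  intervalIntegrable := hf'
  integral_eq_sub s hs t ht := by
    have integrable_to {r : ℝ} (hr : r ∈ Set.uIcc a b) : IntervalIntegrable f' volume a r :=
      hf'.mono_set (Set.uIcc_subset_uIcc_left hr)
    rw [hf s hs, hf t ht, add_sub_add_left_eq_sub,
      intervalIntegral.integral_interval_sub_left (integrable_to ht) (integrable_to hs)]

theorem of_contDiff [CompleteSpace E] (hf : ContDiff ℝ 1 f) (a b : ℝ) :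
    IsPrimitiveOn f (deriv f) a b where
  intervalIntegrable := hf.continuous_deriv_one.intervalIntegrable a b
  integral_eq_sub _ _ _ _ := intervalIntegral.integral_deriv_eq_sub
    (fun u _ => hf.differentiable_one u) (hf.continuous_deriv_one.intervalIntegrable _ _)

theorem eq_add_integral (h : IsPrimitiveOn f f' a b) {t : ℝ} (ht : t ∈ Set.uIcc a b) :
    f t = f a + ∫ u in a..t, f' u := by
  rw [h.integral_eq_sub a Set.left_mem_uIcc t ht, add_sub_cancel]

theorem mono (h : IsPrimitiveOn f f' a b) {c d : ℝ} (hsub : Set.uIcc c d ⊆ Set.uIcc a b) :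
    IsPrimitiveOn f f' c d where
  intervalIntegrable := h.intervalIntegrable.mono_set hsub
  integral_eq_sub s hs t ht := h.integral_eq_sub s (hsub hs) t (hsub ht)

theorem add_const (h : IsPrimitiveOn f f' a b) (c : E) :
    IsPrimitiveOn (fun t => f t + c) f' a b where
  intervalIntegrable := h.intervalIntegrable
  integral_eq_sub s hs t ht := by rw [h.integral_eq_sub s hs t ht, add_sub_add_right_eq_sub]

theorem continuousOn (h : IsPrimitiveOn f f' a b) : ContinuousOn f (Set.uIcc a b) :=
  (continuousOn_const.add (intervalIntegral.continuousOn_primitive_interval'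
    h.intervalIntegrable Set.left_mem_uIcc)).congr fun _ ht => h.eq_add_integral ht

end NormedSpace

variable {f f' g g' : ℝ → ℝ} {a b : ℝ}

theorem exists_absolutelyContinuousOnInterval (h : IsPrimitiveOn f f' a b) :
    ∃ F, AbsolutelyContinuousOnInterval F a b ∧ Set.EqOn f F (Set.uIcc a b) ∧
      ∀ᵐ t, t ∈ Set.uIoc a b → deriv F t = f' t := by
  refine ⟨fun t => f a + ∫ u in a..t, f' u, ?_, fun t ht => h.eq_add_integral ht, ?_⟩
  · have const_ac : AbsolutelyContinuousOnInterval (fun _ => f a) a b :=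
      (LipschitzWith.const (f a)).lipschitzOnWith.absolutelyContinuousOnInterval
    exact const_ac.fun_add
      (h.intervalIntegrable.absolutelyContinuousOnInterval_intervalIntegral Set.left_mem_uIcc)
  · filter_upwards [h.intervalIntegrable.ae_hasDerivAt_integral] with t hderiv ht
    exact ((hderiv (Set.uIoc_subset_uIcc ht) a Set.left_mem_uIcc).const_add (f a)).deriv

theorem integral_mul_eq_sub (hf : IsPrimitiveOn f f' a b) (hg : IsPrimitiveOn g g' a b) :
    ∫ t in a..b, f t * g' t = f b * g b - f a * g a - ∫ t in a..b, f' t * g t := by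
  obtain ⟨F, hF, hfF, hF'⟩ := hf.exists_absolutelyContinuousOnInterval
  obtain ⟨G, hG, hgG, hG'⟩ := hg.exists_absolutelyContinuousOnInterval
  have integral_left : ∫ t in a..b, f t * g' t = ∫ t in a..b, F t * deriv G t := by
    refine intervalIntegral.integral_congr_ae ?_
    filter_upwards [hG'] with t hderiv ht
    rw [hfF (Set.uIoc_subset_uIcc ht), hderiv ht]
  have integral_right : ∫ t in a..b, f' t * g t = ∫ t in a..b, deriv F t * G t := by
    refine intervalIntegral.integral_congr_ae ?_
    filter_upwards [hF'] with t hderiv ht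
    rw [hgG (Set.uIoc_subset_uIcc ht), hderiv ht]
  rw [integral_left, integral_right, hF.integral_mul_deriv_eq_deriv_mul hG,
    hfF Set.left_mem_uIcc, hfF Set.right_mem_uIcc, hgG Set.left_mem_uIcc, hgG Set.right_mem_uIcc]

theorem integral_mul_mul_eq_sum_add {w : ℝ → ℝ} {F G : ℕ → ℝ → ℝ} (n : ℕ)
    (hF : ∀ j < n, IsPrimitiveOn (F j) (fun t => F (j + 1) t * w t) a b)
    (hG : ∀ j < n, IsPrimitiveOn (G (j + 1)) (fun t => w t * G j t) a b) :
    ∫ t in a..b, F 0 t * G 0 t * w t =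
      ∑ j ∈ Finset.range n, (-1) ^ j * (F j b * G (j + 1) b - F j a * G (j + 1) a)
      + (-1) ^ n * ∫ t in a..b, F n t * G n t * w t := by
  induction n with
  | zero => simp
  | succ n ih =>
    have parts : ∫ t in a..b, F n t * G n t * w t =
        F n b * G (n + 1) b - F n a * G (n + 1) a
        - ∫ t in a..b, F (n + 1) t * G (n + 1) t * w t := by
      simpa only [mul_assoc, mul_left_comm, mul_comm] using
        (hF n n.lt_succ_self).integral_mul_eq_sub (hG n n.lt_succ_self)
    rw [ih (fun j hj => hF j (hj.trans n.lt_succ_self))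
      (fun j hj => hG j (hj.trans n.lt_succ_self)), parts, Finset.sum_range_succ]
    ring

theorem of_iterated_integrals {w : ℝ → ℝ} {c : ℕ → ℝ} {G : ℕ → ℝ → ℝ} {n : ℕ}
    (hw : IntervalIntegrable w volume a b)
    (hG0 : IntervalIntegrable (fun t => w t * G 0 t) volume a b)
    (hG : ∀ j < n, ∀ t ∈ Set.uIcc a b, G (j + 1) t = c j + ∫ u in a..t, w u * G j u) :
    ∀ j < n, IsPrimitiveOn (G (j + 1)) (fun t => w t * G j t) a b := by
  intro j hj
  induction j with
  | zero => exact of_eq_const_add_integral (c 0) hG0 (hG 0 hj)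
  | succ j ih =>
    exact of_eq_const_add_integral (c (j + 1))
      (hw.mul_continuousOn (ih (j.lt_succ_self.trans hj)).continuousOn) (hG (j + 1) hj)

end IsPrimitiveOn

/-- The first backward sawtooth function `Z⁻₁` of the path `X`, with initial datum `c`, on the
whole real line. At an integer `t` the convention for the floor compares `X t` to `X (t + 1)`. -/
noncomputable def backwardSawtooth (X : ℝ → ℝ) (c t : ℝ) : ℝ :=
  X t - X ((⌊t⌋ : ℝ) + 1) + c

section Sawtooth

variable {X X' Y Y' f : ℝ → ℝ} {N k : ℕ}

theorem backwardSawtooth_eq_of_mem_Ioo (X : ℝ → ℝ) (c : ℝ) {t : ℝ}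
    (ht : t ∈ Set.Ioo (k : ℝ) (k + 1)) :
    backwardSawtooth X c t = X t + (c - X (k + 1)) := by
  have floor_eq : ⌊t⌋ = (k : ℤ) := Int.floor_eq_iff.2 ⟨mod_cast ht.1.le, mod_cast ht.2⟩
  rw [backwardSawtooth, floor_eq, Int.cast_natCast]
  ring

theorem uIcc_natCast_add_one_subset (hk : k < N) :
    Set.uIcc (k : ℝ) (k + 1) ⊆ Set.uIcc 0 (N : ℝ) := by
  rw [Set.uIcc_of_le (by simp), Set.uIcc_of_le N.cast_nonneg]
  exact Set.Icc_subset_Icc k.cast_nonneg (mod_cast hk)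

theorem intervalIntegrable_mul_backwardSawtooth (hX : ContinuousOn X (Set.uIcc 0 (N : ℝ)))
    (hf : IntervalIntegrable f volume 0 N) (c : ℝ) :
    IntervalIntegrable (fun t => f t * backwardSawtooth X c t) volume 0 N := by
  have integrable_piece : ∀ k < N, IntervalIntegrable (fun t => f t * backwardSawtooth X c t)
      volume (k : ℝ) ((k + 1 : ℕ) : ℝ) := by
    intro k hk
    push_cast
    have hsub := uIcc_natCast_add_one_subset hk
    refine ((hf.mono_set hsub).mul_continuousOn
      ((hX.mono hsub).fun_add (continuousOn_const (c := c - X (k + 1))))).congr_uIoo fun t ht => ?_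
    rw [Set.uIoo_of_le (by simp)] at ht
    simp only [backwardSawtooth_eq_of_mem_Ioo X c ht]
  simpa only [Nat.cast_zero] using IntervalIntegrable.trans_iterate integrable_piece

theorem mul_sub_eq_integral_add_integral_backwardSawtooth
    (hX : IsPrimitiveOn X X' k (k + 1)) (hY : IsPrimitiveOn Y Y' k (k + 1)) (c : ℝ) :
    Y k * (X (k + 1) - X k) =
      (∫ t in (k : ℝ)..(k + 1), Y t * X' t) - c * (Y (k + 1) - Y k)
      + ∫ t in (k : ℝ)..(k + 1), Y' t * backwardSawtooth X c t := by
  have remainder_eq : ∫ t in (k : ℝ)..(k + 1), Y' t * backwardSawtooth X c t =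
      ∫ t in (k : ℝ)..(k + 1), Y' t * (X t + (c - X (k + 1))) :=
    intervalIntegral.integral_congr_Ioo_of_le (by simp) fun t ht => by
      simp only [backwardSawtooth_eq_of_mem_Ioo X c ht]
  rw [remainder_eq, hY.integral_mul_eq_sub (hX.add_const (c - X (k + 1)))]
  ring

theorem sum_mul_sub_eq_integral_add_integral_backwardSawtooth
    (hX : IsPrimitiveOn X X' 0 N) (hY : IsPrimitiveOn Y Y' 0 N) (c : ℝ) :
    ∑ k ∈ Finset.range N, Y k * (X (k + 1) - X k) =
      (∫ t in (0 : ℝ)..N, Y t * X' t) - c * (Y N - Y 0)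
      + ∫ t in (0 : ℝ)..N, Y' t * backwardSawtooth X c t := by
  have sum_integral {h : ℝ → ℝ} (hh : IntervalIntegrable h volume 0 N) :
      ∑ k ∈ Finset.range N, ∫ t in (k : ℝ)..(k + 1), h t = ∫ t in (0 : ℝ)..N, h t := by
    simpa using intervalIntegral.sum_integral_adjacent_intervals (a := fun k : ℕ => (k : ℝ))
      fun k hk => hh.mono_set (by simpa using uIcc_natCast_add_one_subset hk)
  have sum_sub : ∑ k ∈ Finset.range N, (Y (k + 1) - Y k) = Y N - Y 0 := by
    simpa using Finset.sum_range_sub (fun k : ℕ => Y k) N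
  calc ∑ k ∈ Finset.range N, Y k * (X (k + 1) - X k)
    _ = ∑ k ∈ Finset.range N, ((∫ t in (k : ℝ)..(k + 1), Y t * X' t) - c * (Y (k + 1) - Y k)
          + ∫ t in (k : ℝ)..(k + 1), Y' t * backwardSawtooth X c t) :=
        Finset.sum_congr rfl fun k hk =>
          have hsub := uIcc_natCast_add_one_subset (Finset.mem_range.1 hk)
          mul_sub_eq_integral_add_integral_backwardSawtooth (hX.mono hsub) (hY.mono hsub) c
    _ = _ := by
        rw [Finset.sum_add_distrib, Finset.sum_sub_distrib, ← Finset.mul_sum, sum_sub,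
          sum_integral (hX.intervalIntegrable.continuousOn_mul hY.continuousOn),
          sum_integral
            (intervalIntegrable_mul_backwardSawtooth hX.continuousOn hY.intervalIntegrable c)]

end Sawtooth

theorem backward_preliminary_euler_maclaurin_general {N m : ℕ} (hm : 1 ≤ m) {X X' : ℝ → ℝ}
    (hX : IsPrimitiveOn X X' 0 N) {b : ℕ → ℝ} {Z : ℕ → ℝ → ℝ}
    (hZ1 : ∀ t ∈ Set.Ico (0 : ℝ) N, Z 1 t = backwardSawtooth X (b 1) t)
    (hZrec : ∀ l, 2 ≤ l → l ≤ m → ∀ t ∈ Set.Icc (0 : ℝ) N,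
      Z l t = b l + ∫ s in (0 : ℝ)..t, X' s * Z (l - 1) s)
    {Y : ℕ → ℝ → ℝ}
    (hY : ∀ k < m, IsPrimitiveOn (Y k) (fun t => Y (k + 1) t * X' t) 0 N) :
    ∑ k ∈ Finset.range N, Y 0 k * (X (k + 1) - X k) =
      (∫ t in (0 : ℝ)..N, Y 0 t * X' t) - b 1 * (Y 0 N - Y 0 0)
      + (∑ l ∈ Finset.Icc 2 m, (-1) ^ l * (Y (l - 1) N * Z l N - Y (l - 1) 0 * Z l 0))
      + (-1) ^ (m + 1) * ∫ t in (0 : ℝ)..N, Y m t * Z m t * X' t := by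
  obtain ⟨n, rfl⟩ := Nat.exists_eq_add_of_le' hm
  have hN : (0 : ℝ) ≤ N := N.cast_nonneg
  have hZ1_Ioo : ∀ t ∈ Set.Ioo (0 : ℝ) N, Z 1 t = backwardSawtooth X (b 1) t :=
    fun t ht => hZ1 t (Set.Ioo_subset_Ico_self ht)
  have integrable_Z1 : IntervalIntegrable (fun t => X' t * Z 1 t) volume 0 N :=
    (intervalIntegrable_mul_backwardSawtooth hX.continuousOn hX.intervalIntegrable
      (b 1)).congr_uIoo fun t ht => by
        simp only [hZ1_Ioo t (Set.uIoo_of_le hN ▸ ht)]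
  have hZ : ∀ j < n, IsPrimitiveOn (Z (j + 1 + 1)) (fun t => X' t * Z (j + 1) t) 0 N :=
    .of_iterated_integrals (G := fun j => Z (j + 1)) (c := fun j => b (j + 2))
      hX.intervalIntegrable integrable_Z1
      fun j hj t ht => hZrec (j + 2) (by lia) (by lia) t (Set.uIcc_of_le hN ▸ ht)
  have remainder_eq : ∫ t in (0 : ℝ)..N, Y 1 t * X' t * backwardSawtooth X (b 1) t =
      ∫ t in (0 : ℝ)..N, Y 1 t * Z 1 t * X' t :=
    intervalIntegral.integral_congr_Ioo_of_le hN fun t ht => by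
      simp only [hZ1_Ioo t ht, mul_right_comm]
  rw [sum_mul_sub_eq_integral_add_integral_backwardSawtooth hX (hY 0 n.succ_pos) (b 1),
    remainder_eq, IsPrimitiveOn.integral_mul_mul_eq_sum_add (F := fun j => Y (j + 1))
      (G := fun j => Z (j + 1)) n (fun j hj => hY (j + 1) (by lia)) hZ,
    ← Finset.Ico_add_one_right_eq_Icc, Finset.sum_Ico_eq_sum_range]
  simp [pow_add, add_comm, add_left_comm, add_assoc]

/-- Backward preliminary Euler–Maclaurin formula for Riemann–Stieltjes sums of a
controlled integrand `Y` along a one-dimensional path `X`, with backward sawtooth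
functions `Z⁻_l` built from initial data `b`. -/
theorem backward_preliminary_euler_maclaurin (N m : ℕ) (hN : 1 ≤ N) (hm : 2 ≤ m)
    (X : ℝ → ℝ) (hX : ContDiff ℝ 1 X)
    (hX0 : ∀ u : ℝ, u ≤ 0 → X u = X 0)
    (hXN : ∀ u : ℝ, (N : ℝ) ≤ u → X u = X (N : ℝ))
    (b : ℕ → ℝ) (hb0 : b 0 = 1)
    (Z : ℕ → ℝ → ℝ)
    (hZ1 : ∀ t : ℝ, Z 1 t = X t - X ((⌊t⌋ : ℝ) + 1) + b 1)
    (hZrec : ∀ l, 2 ≤ l → ∀ t : ℝ,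
      Z l t = b l + ∫ s in (0:ℝ)..t, deriv X s * Z (l - 1) s)
    (Y : ℕ → ℝ → ℝ)
    (hYcont : ∀ k, k ≤ m → ContinuousOn (Y k) (Set.Icc 0 (N : ℝ)))
    (hYctrl : ∀ k, k ≤ m - 1 → ∀ t ∈ Set.Icc (0:ℝ) (N:ℝ),
      Y k t = Y k 0 + ∫ s in (0:ℝ)..t, Y (k + 1) s * deriv X s) :
    ∑ k ∈ Finset.range N, Y 0 (k : ℝ) * (X ((k : ℝ) + 1) - X (k : ℝ)) =
      (∫ t in (0:ℝ)..(N:ℝ), Y 0 t * deriv X t)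
      - b 1 * (Y 0 (N : ℝ) - Y 0 0)
      + (∑ l ∈ Finset.Icc 2 m,
          (-1 : ℝ) ^ l * (Y (l - 1) (N : ℝ) * Z l (N : ℝ) - Y (l - 1) 0 * Z l 0))
      + (-1 : ℝ) ^ (m + 1) * ∫ t in (0:ℝ)..(N:ℝ), Y m t * Z m t * deriv X t := by
  have hIcc : Set.uIcc (0 : ℝ) N = Set.Icc 0 (N : ℝ) := Set.uIcc_of_le N.cast_nonneg
  refine backward_preliminary_euler_maclaurin_general (by lia) (.of_contDiff hX 0 N)
    (fun t _ => hZ1 t) (fun l hl _ t _ => hZrec l hl t)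
    fun k hk => .of_eq_const_add_integral (Y k 0) ?_ ?_
  · exact (hIcc ▸ (hYcont (k + 1) hk).mul hX.continuous_deriv_one.continuousOn).intervalIntegrable
  · exact fun t ht => hYctrl k (by lia) t (hIcc ▸ ht)
end

section
/- Let x_0,…,x_N ∈ ℝ^d, let X : [0,N] → ℝ^d be the piecewise linear interpolation of x, let 0 ≤ m ≤ N be an integer and (j_1,…,j_n) a word with n ≥ 1 and letters in {1,…,d}. Then the signature of X equals the Hoffman-type composition sum of iterated sums: ⟨S_{0,m}(X),(j_1,…,j_n)⟩ = Σ_{I composition of n, I = (I_1,…,I_k)} (1/I!)·Σ_{0 ≤ l_1 < l_2 < ⋯ < l_k < m} ∏_{r=1}^{k} ∏_{s ∈ B_r} Δx_{l_r}^{j_s}, where B_1,…,B_k are the consecutive blocks of {1,…,n} determined by I. -/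
open scoped Nat
open MeasureTheory

/-!
Chen's identity cuts an iterated integral at an intermediate time: a prefix of the word is
integrated before the cut and the rest after it. Cutting at every knot of the interpolation
distributes the word over the successive steps, and recording which steps receive a non-empty block
of letters gives a composition together with increasing step indices. On a single step the
derivative is constant, so a block of `b` letters contributes the product of its increments times
the volume `1 / b!` of a simplex.
-/

theorem strictMono_snoc_iff {α : Type*} [Preorder α] {n : ℕ} {v : Fin n → α} {a : α} :
    StrictMono (Fin.snoc (α := fun _ => α) v a) ↔ StrictMono v ∧ ∀ i, v i < a := by
  simp only [StrictMono, Fin.forall_fin_succ', Fin.snoc_castSucc, Fin.snoc_last,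
    Fin.castSucc_lt_castSucc_iff, Fin.castSucc_lt_last, (Fin.le_last _).not_gt, lt_irrefl,
    forall_true_left, false_imp_iff, and_true, implies_true, forall_and]

section Simplex

variable {n : ℕ} {s t : ℝ}

theorem mem_simplexSet_iff {u : Fin n → ℝ} :
    u ∈ simplexSet n s t ↔ (∀ i, u i ∈ Set.Ioo s t) ∧ StrictMono u :=
  Iff.rfl

theorem simplexSet_zero : simplexSet 0 s t = Set.univ :=
  Set.eq_univ_of_forall fun _ => mem_simplexSet_iff.2 ⟨finZeroElim, Subsingleton.strictMono _⟩

theorem simplexSet_self (hn : n ≠ 0) : simplexSet n s s = ∅ :=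
  Set.eq_empty_of_forall_notMem fun _ hu =>
    (Set.Ioo_self s).le ((mem_simplexSet_iff.1 hu).1 ⟨0, Nat.pos_of_ne_zero hn⟩)

theorem measurableSet_simplexSet : MeasurableSet (simplexSet n s t) := by
  simp only [simplexSet, forall_and, Set.ofPred_and, Set.ofPred_forall]
  measurability

theorem snoc_mem_simplexSet_iff {r : ℝ} {v : Fin n → ℝ} :
    Fin.snoc (α := fun _ => ℝ) v r ∈ simplexSet (n + 1) s t ↔
      r ∈ Set.Ioo s t ∧ v ∈ simplexSet n s r := by
  simp only [mem_simplexSet_iff, strictMono_snoc_iff, Fin.forall_fin_succ', Fin.snoc_castSucc,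
    Fin.snoc_last]
  constructor
  · rintro ⟨⟨hv, hr⟩, hmono, hlt⟩
    exact ⟨hr, fun i => ⟨(hv i).1, hlt i⟩, hmono⟩
  · rintro ⟨hr, hv, hmono⟩
    exact ⟨⟨fun i => ⟨(hv i).1, (hv i).2.trans hr.2⟩, hr⟩, hmono, fun i => (hv i).2⟩

theorem coe_piFinSuccAbove_last_symm {α : Type*} [MeasurableSpace α] (n : ℕ) :
    ⇑(MeasurableEquiv.piFinSuccAbove (fun _ => α) (Fin.last n)).symm =
      fun p => Fin.snoc (α := fun _ => α) p.2 p.1 :=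
  funext fun p => Fin.insertNth_last' p.1 p.2

theorem measurableEmbedding_snoc :
    MeasurableEmbedding fun p : ℝ × (Fin n → ℝ) => Fin.snoc (α := fun _ => ℝ) p.2 p.1 :=
  coe_piFinSuccAbove_last_symm (α := ℝ) n ▸ MeasurableEquiv.measurableEmbedding _

theorem measurePreserving_snoc :
    MeasurePreserving fun p : ℝ × (Fin n → ℝ) => Fin.snoc (α := fun _ => ℝ) p.2 p.1 :=
  coe_piFinSuccAbove_last_symm (α := ℝ) n ▸
    (volume_preserving_piFinSuccAbove (fun _ => ℝ) (Fin.last n)).symm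

section Fubini

variable {E : Type*} [NormedAddCommGroup E] {G : (Fin (n + 1) → ℝ) → E}

theorem integrable_indicator_simplexSet_snoc (hG : IntegrableOn G (simplexSet (n + 1) s t)) :
    Integrable fun p : ℝ × (Fin n → ℝ) =>
      (simplexSet (n + 1) s t).indicator G (Fin.snoc (α := fun _ => ℝ) p.2 p.1) :=
  (measurePreserving_snoc.integrable_comp_emb measurableEmbedding_snoc).2
    (hG.integrable_indicator measurableSet_simplexSet)

variable [NormedSpace ℝ E]

theorem integral_indicator_simplexSet_snoc (r : ℝ) :
    ∫ v : Fin n → ℝ, (simplexSet (n + 1) s t).indicator G (Fin.snoc (α := fun _ => ℝ) v r) =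
      (Set.Ioo s t).indicator (fun r => ∫ v in simplexSet n s r, G (Fin.snoc v r)) r := by
  classical
  by_cases hr : r ∈ Set.Ioo s t
  · rw [Set.indicator_of_mem hr, ← integral_indicator measurableSet_simplexSet]
    simp only [Set.indicator_apply, snoc_mem_simplexSet_iff, hr, true_and]
  · simp [snoc_mem_simplexSet_iff, hr]

theorem integrableOn_setIntegral_simplexSet_snoc
    (hG : IntegrableOn G (simplexSet (n + 1) s t)) :
    IntegrableOn (fun r => ∫ v in simplexSet n s r, G (Fin.snoc v r)) (Set.Ioo s t) := by
  rw [← integrable_indicator_iff measurableSet_Ioo]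
  simpa only [integral_indicator_simplexSet_snoc] using
    (integrable_indicator_simplexSet_snoc hG).integral_prod_left

theorem setIntegral_simplexSet_succ (hG : IntegrableOn G (simplexSet (n + 1) s t)) :
    ∫ u in simplexSet (n + 1) s t, G u =
      ∫ r in Set.Ioo s t, ∫ v in simplexSet n s r, G (Fin.snoc v r) := by
  rw [← integral_indicator measurableSet_simplexSet, ← integral_indicator measurableSet_Ioo,
    ← measurePreserving_snoc.integral_comp measurableEmbedding_snoc, Measure.volume_eq_prod,
    integral_prod _ (integrable_indicator_simplexSet_snoc hG)]
  simp only [integral_indicator_simplexSet_snoc]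

end Fubini

end Simplex

section IteratedIntegral

variable {𝕜 : Type*} [RCLike 𝕜]

/-- The iterated integral of `f 0, …, f (n - 1)` over the simplex `s < u_0 < ⋯ < u_{n-1} < t`. The
integrands form an infinite sequence so that a prefix or a shift of it has the same type. -/
noncomputable def iteratedIntegral (f : ℕ → ℝ → 𝕜) (s t : ℝ) (n : ℕ) : 𝕜 :=
  ∫ u in simplexSet n s t, ∏ k : Fin n, f k (u k)

variable {f g : ℕ → ℝ → 𝕜} {s c t : ℝ} {n : ℕ}

theorem iteratedIntegral_zero (f : ℕ → ℝ → 𝕜) (s t : ℝ) : iteratedIntegral f s t 0 = 1 := by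
  simp [iteratedIntegral, simplexSet_zero, measureReal_def, volume_pi]

theorem iteratedIntegral_self (f : ℕ → ℝ → 𝕜) (s : ℝ) (hn : n ≠ 0) :
    iteratedIntegral f s s n = 0 := by
  simp [iteratedIntegral, simplexSet_self hn]

theorem iteratedIntegral_congr (h : ∀ k < n, Set.EqOn (f k) (g k) (Set.Ioo s t)) :
    iteratedIntegral f s t n = iteratedIntegral g s t n :=
  setIntegral_congr_fun measurableSet_simplexSet fun _ hu =>
    Finset.prod_congr rfl fun k _ => h k k.2 ((mem_simplexSet_iff.1 hu).1 k)

theorem integrableOn_simplexSet_prod (hst : s ≤ t)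
    (hf : ∀ k < n, IntervalIntegrable (f k) volume s t) :
    IntegrableOn (fun u => ∏ k : Fin n, f k (u k)) (simplexSet n s t) := by
  have hbox : IntegrableOn (fun u : Fin n → ℝ => ∏ k : Fin n, f k (u k))
      (Set.univ.pi fun _ => Set.Ioo s t) := by
    rw [IntegrableOn, volume_pi, Measure.restrict_pi_pi]
    exact .fintype_prod fun k =>
      (intervalIntegrable_iff_integrableOn_Ioo_of_le hst).1 (hf k k.2)
  exact hbox.mono_set fun u hu k _ => (mem_simplexSet_iff.1 hu).1 k

theorem setIntegral_simplexSet_prod_snoc (f : ℕ → ℝ → 𝕜) (s : ℝ) (n : ℕ) (r : ℝ) :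
    ∫ v in simplexSet n s r, ∏ k : Fin (n + 1), f k (Fin.snoc (α := fun _ => ℝ) v r k) =
      f n r * iteratedIntegral f s r n := by
  simp [Fin.prod_univ_castSucc, iteratedIntegral, integral_mul_const, mul_comm (f n r)]

theorem intervalIntegrable_mul_iteratedIntegral (hst : s ≤ t)
    (hf : ∀ k < n + 1, IntervalIntegrable (f k) volume s t) :
    IntervalIntegrable (fun r => f n r * iteratedIntegral f s r n) volume s t := by
  rw [intervalIntegrable_iff_integrableOn_Ioo_of_le hst]
  simpa only [setIntegral_simplexSet_prod_snoc] using
    integrableOn_setIntegral_simplexSet_snoc (integrableOn_simplexSet_prod hst hf)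

theorem iteratedIntegral_succ (hst : s ≤ t)
    (hf : ∀ k < n + 1, IntervalIntegrable (f k) volume s t) :
    iteratedIntegral f s t (n + 1) = ∫ r in s..t, f n r * iteratedIntegral f s r n := by
  rw [intervalIntegral.integral_of_le hst, integral_Ioc_eq_integral_Ioo, iteratedIntegral,
    setIntegral_simplexSet_succ (integrableOn_simplexSet_prod hst hf)]
  simp only [setIntegral_simplexSet_prod_snoc]

theorem integral_mul_sum_iteratedIntegral_shift (hct : c ≤ t)
    (hf : ∀ k < n + 1, IntervalIntegrable (f k) volume c t) (A : ℕ → 𝕜) :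
    ∫ r in c..t, f n r * ∑ p ∈ Finset.range (n + 1),
        A p * iteratedIntegral (fun k => f (p + k)) c r (n - p) =
      ∑ p ∈ Finset.range (n + 1), A p * iteratedIntegral (fun k => f (p + k)) c t (n + 1 - p) := by
  have hle : ∀ p ∈ Finset.range (n + 1), p ≤ n := fun p => Finset.mem_range_succ_iff.1
  have hshift : ∀ p ≤ n, ∀ k < n - p + 1, IntervalIntegrable (f (p + k)) volume c t :=
    fun p hp k hk => hf (p + k) (by lia)
  have hterm (r : ℝ) :
      f n r * ∑ p ∈ Finset.range (n + 1),
          A p * iteratedIntegral (fun k => f (p + k)) c r (n - p) =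
        ∑ p ∈ Finset.range (n + 1),
          A p * (f (p + (n - p)) r * iteratedIntegral (fun k => f (p + k)) c r (n - p)) := by
    rw [Finset.mul_sum]
    exact Finset.sum_congr rfl fun p hp => by
      rw [Nat.add_sub_of_le (hle p hp), mul_left_comm]
  simp only [hterm]
  rw [intervalIntegral.integral_finsetSum fun p hp =>
    (intervalIntegrable_mul_iteratedIntegral hct (hshift p (hle p hp))).const_mul _]
  exact Finset.sum_congr rfl fun p hp => by
    rw [intervalIntegral.integral_const_mul, Nat.sub_add_comm (hle p hp),
      iteratedIntegral_succ hct (hshift p (hle p hp))]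

/-- Chen's identity. -/
theorem iteratedIntegral_eq_sum_mul (hsc : s ≤ c) (hct : c ≤ t)
    (hf : ∀ k < n, IntervalIntegrable (f k) volume s t) :
    iteratedIntegral f s t n = ∑ p ∈ Finset.range (n + 1),
      iteratedIntegral f s c p * iteratedIntegral (fun k => f (p + k)) c t (n - p) := by
  induction n generalizing t with
  | zero => simp [iteratedIntegral_zero]
  | succ n ih =>
    have hst := hsc.trans hct
    have hc : c ∈ Set.uIcc s t := Set.mem_uIcc_of_le hsc hct
    have hleft : ∀ k < n + 1, IntervalIntegrable (f k) volume s c := fun k hk =>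
      (hf k hk).mono_set (Set.uIcc_subset_uIcc_left hc)
    have hright : ∀ k < n + 1, IntervalIntegrable (f k) volume c t := fun k hk =>
      (hf k hk).mono_set (Set.uIcc_subset_uIcc_right hc)
    have hsplit : Set.EqOn (fun r => f n r * iteratedIntegral f s r n)
        (fun r => f n r * ∑ p ∈ Finset.range (n + 1),
          iteratedIntegral f s c p * iteratedIntegral (fun k => f (p + k)) c r (n - p))
        (Set.uIcc c t) := by
      intro r hr
      rw [Set.uIcc_of_le hct] at hr
      exact congrArg (f n r * ·) (ih hr.1 fun k hk => (hf k (by lia)).mono_set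
        (Set.uIcc_subset_uIcc_left (Set.mem_uIcc_of_le (hsc.trans hr.1) hr.2)))
    rw [iteratedIntegral_succ hst hf, ← intervalIntegral.integral_add_adjacent_intervals
        (intervalIntegrable_mul_iteratedIntegral hsc hleft)
        ((intervalIntegrable_mul_iteratedIntegral hst hf).mono_set
          (Set.uIcc_subset_uIcc_right hc)),
      ← iteratedIntegral_succ hsc hleft, intervalIntegral.integral_congr hsplit,
      integral_mul_sum_iteratedIntegral_shift hct hright, Finset.sum_range_succ _ (n + 1),
      Nat.sub_self, iteratedIntegral_zero, mul_one, add_comm]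

theorem volume_real_simplexSet (hst : s ≤ t) (n : ℕ) :
    volume.real (simplexSet n s t) = (t - s) ^ n / n ! := by
  have hone (r : ℝ) (n : ℕ) :
      volume.real (simplexSet n s r) = iteratedIntegral (fun _ _ => (1 : ℝ)) s r n := by
    simp [iteratedIntegral]
  induction n generalizing t with
  | zero => simp [hone, iteratedIntegral_zero]
  | succ n ih =>
    rw [hone, iteratedIntegral_succ hst fun _ _ => intervalIntegrable_const]
    simp only [← hone, one_mul]
    have hvol : ∀ r ∈ Set.uIcc s t, volume.real (simplexSet n s r) = (r - s) ^ n / n ! := by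
      intro r hr
      rw [Set.uIcc_of_le hst] at hr
      exact ih hr.1
    rw [intervalIntegral.integral_congr hvol, intervalIntegral.integral_div,
      intervalIntegral.integral_comp_sub_right (fun r => r ^ n), integral_pow, Nat.factorial_succ]
    push_cast
    field_simp
    simp

theorem iteratedIntegral_of_const {b : ℕ → 𝕜} (hst : s ≤ t)
    (hf : ∀ k < n, ∀ r ∈ Set.Ioo s t, f k r = b k) :
    iteratedIntegral f s t n = ((t - s) ^ n / n !) • ∏ k : Fin n, b k := by
  rw [iteratedIntegral_congr (g := fun k _ => b k) hf, iteratedIntegral, setIntegral_const,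
    volume_real_simplexSet hst]

end IteratedIntegral

section IteratedSum

variable {R : Type*} [CommSemiring R]

/-- The strictly increasing `k`-tuples of natural numbers below `m`, the discrete analogue of
`simplexSet`. They take values in `ℕ` rather than `Fin m`, so that truncating at a smaller bound
does not change the type. -/
def increasingTuples (k m : ℕ) : Finset (Fin k → ℕ) :=
  (Fintype.piFinset fun _ => Finset.range m).filter StrictMono

theorem mem_increasingTuples_iff {k m : ℕ} {l : Fin k → ℕ} :
    l ∈ increasingTuples k m ↔ (∀ r, l r < m) ∧ StrictMono l := by
  simp [increasingTuples]

theorem snoc_mem_increasingTuples_iff {k m i : ℕ} {l : Fin k → ℕ} :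
    Fin.snoc (α := fun _ => ℕ) l i ∈ increasingTuples (k + 1) m ↔
      i < m ∧ l ∈ increasingTuples k i := by
  simp only [mem_increasingTuples_iff, strictMono_snoc_iff, Fin.forall_fin_succ',
    Fin.snoc_castSucc, Fin.snoc_last]
  constructor
  · rintro ⟨⟨-, hi⟩, hmono, hlt⟩
    exact ⟨hi, hlt, hmono⟩
  · rintro ⟨hi, hlt, hmono⟩
    exact ⟨⟨fun r => (hlt r).trans hi, hi⟩, hmono, hlt⟩

theorem sum_increasingTuples_eq_sum_fin {M : Type*} [AddCommMonoid M] (k m : ℕ)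
    (F : (Fin k → ℕ) → M) :
    ∑ l ∈ increasingTuples k m, F l =
      ∑ l ∈ Finset.univ.filter (fun l : Fin k → Fin m => StrictMono l), F fun r => l r := by
  symm
  refine Finset.sum_bij (fun l _ r => (l r : ℕ)) ?_ ?_ ?_ fun _ _ => rfl
  · intro l hl
    exact mem_increasingTuples_iff.2 ⟨fun r => (l r).2, (Finset.mem_filter.1 hl).2⟩
  · intro l _ l' _ h
    exact funext fun r => Fin.ext (congrFun h r)
  · intro l hl
    obtain ⟨hlt, hmono⟩ := mem_increasingTuples_iff.1 hl
    exact ⟨fun r => ⟨l r, hlt r⟩, Finset.mem_filter.2 ⟨Finset.mem_univ _, hmono⟩, rfl⟩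

/-- The iterated sum `∑_{0 ≤ l_0 < ⋯ < l_{k-1} < m} ∏_r g r l_r`, the discrete analogue of
`iteratedIntegral`. -/
def iteratedSum (g : ℕ → ℕ → R) (m k : ℕ) : R :=
  ∑ l ∈ increasingTuples k m, ∏ r : Fin k, g r (l r)

theorem iteratedSum_zero (g : ℕ → ℕ → R) (m : ℕ) : iteratedSum g m 0 = 1 := by
  simp [iteratedSum, increasingTuples, Subsingleton.strictMono]

theorem iteratedSum_succ (g : ℕ → ℕ → R) (m k : ℕ) :
    iteratedSum g m (k + 1) = ∑ i ∈ Finset.range m, iteratedSum g i k * g k i := by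
  simp only [iteratedSum, Finset.sum_mul]
  rw [Finset.sum_sigma']
  refine Finset.sum_nbij' (fun l => ⟨l (Fin.last k), Fin.init l⟩)
    (fun q => Fin.snoc (α := fun _ => ℕ) q.2 q.1) ?_ ?_ ?_ ?_ ?_
  · intro l hl
    rw [← Fin.snoc_init_self l, snoc_mem_increasingTuples_iff] at hl
    simpa using hl
  · intro q hq
    simpa [snoc_mem_increasingTuples_iff] using hq
  · simp
  · simp
  · simp [Fin.prod_univ_castSucc, Fin.init]

theorem iteratedSum_congr {g h : ℕ → ℕ → R} {m k : ℕ} (hgh : ∀ r < k, ∀ i, g r i = h r i) :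
    iteratedSum g m k = iteratedSum h m k :=
  Finset.sum_congr rfl fun _ _ => Finset.prod_congr rfl fun r _ => hgh r r.2 _

end IteratedSum

section CompositionSum

/-- The composition of `n` obtained from a composition of `p < n` by adding a last block of
size `n - p`. -/
def appendLastBlock {n : ℕ} (p : Fin n) (c : Composition p) : Composition n :=
  (c.append (.single (n - p) (Nat.sub_pos_of_lt p.2))).cast (Nat.add_sub_of_le p.2.le)

theorem blocks_appendLastBlock {n : ℕ} (p : Fin n) (c : Composition p) :
    (appendLastBlock p c).blocks = c.blocks ++ [n - p] :=
  rfl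

theorem appendLastBlock_injective (n : ℕ) :
    Function.Injective fun q : (p : Fin n) × Composition p => appendLastBlock q.1 q.2 := by
  rintro ⟨p, c⟩ ⟨p', c'⟩ h
  have hblocks : c.blocks = c'.blocks :=
    (List.append_inj' (congrArg Composition.blocks h) rfl).1
  obtain rfl : p = p' := Fin.ext (by rw [← c.blocks_sum, hblocks, c'.blocks_sum])
  rw [Composition.ext hblocks]

theorem exists_appendLastBlock_eq {n : ℕ} (hn : n ≠ 0) (c : Composition n) :
    ∃ (p : Fin n) (c' : Composition p), appendLastBlock p c' = c := by
  induction c using Composition.recOnAppendSingle with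
  | zero => exact absurd rfl hn
  | append_single k n c _ =>
    exact ⟨⟨n, by lia⟩, c, Composition.ext (by simp [blocks_appendLastBlock])⟩

theorem sum_composition_eq_sum_appendLastBlock {M : Type*} [AddCommMonoid M] {n : ℕ}
    (hn : n ≠ 0) (F : Composition n → M) :
    ∑ c, F c = ∑ p : Fin n, ∑ c : Composition p, F (appendLastBlock p c) := by
  rw [← Fintype.sum_sigma' fun (p : Fin n) (c : Composition p) => F (appendLastBlock p c)]
  refine (Fintype.sum_bijective _ ⟨appendLastBlock_injective n, fun c => ?_⟩ _ _
    fun _ => rfl).symm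
  obtain ⟨p, c', h⟩ := exists_appendLastBlock_eq hn c
  exact ⟨⟨p, c'⟩, h⟩

variable {R : Type*} [CommSemiring R]

/-- The sum over all ways to place consecutive blocks of sizes `L`, the first one starting at
position `0`, at increasing times below `m`; a block of size `b` starting at position `p` and placed
at time `i` has weight `W i p b`. The default value in `getD` is never used: it only avoids a
dependence of the weights on `L.length`. -/
def blockSum (W : ℕ → ℕ → ℕ → R) (m : ℕ) (L : List ℕ) : R :=
  iteratedSum (fun r i => W i (L.take r).sum (L.getD r 0)) m L.length

/-- The Hoffman-type sum over all compositions of `n` and all increasing placements below time `m`,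
with block weights `W` as in `blockSum`. -/
def compositionSum (W : ℕ → ℕ → ℕ → R) (m n : ℕ) : R :=
  ∑ c : Composition n, blockSum W m c.blocks

variable (W : ℕ → ℕ → ℕ → R)

theorem blockSum_nil (m : ℕ) : blockSum W m [] = 1 :=
  iteratedSum_zero _ m

theorem blockSum_concat (m : ℕ) (L : List ℕ) (b : ℕ) :
    blockSum W m (L ++ [b]) = ∑ i ∈ Finset.range m, blockSum W i L * W i L.sum b := by
  unfold blockSum
  rw [List.length_append, List.length_singleton, iteratedSum_succ]
  refine Finset.sum_congr rfl fun i _ => ?_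
  congr 1
  · refine iteratedSum_congr fun r hr j => ?_
    rw [List.getD_append _ _ _ _ hr, List.take_append_of_le_length hr.le]
  · simp

theorem compositionSum_zero_right (m : ℕ) : compositionSum W m 0 = 1 := by
  have hnil (c : Composition 0) : c.blocks = [] := c.blocks_eq_nil.2 rfl
  simp [compositionSum, hnil, blockSum_nil, composition_card]

theorem compositionSum_eq_sum_lastBlock (m : ℕ) {n : ℕ} (hn : n ≠ 0) :
    compositionSum W m n = ∑ i ∈ Finset.range m, ∑ p ∈ Finset.range n,
      compositionSum W i p * W i p (n - p) := by
  rw [compositionSum, sum_composition_eq_sum_appendLastBlock hn, Finset.sum_comm,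
    Finset.sum_range]
  simp only [blocks_appendLastBlock, blockSum_concat, Composition.blocks_sum, compositionSum,
    Finset.sum_mul]
  exact Finset.sum_congr rfl fun p _ => Finset.sum_comm

theorem compositionSum_zero_left {n : ℕ} (hn : n ≠ 0) : compositionSum W 0 n = 0 := by
  rw [compositionSum_eq_sum_lastBlock W 0 hn, Finset.sum_range_zero]

theorem compositionSum_succ_left (hW : ∀ i p, W i p 0 = 1) (m n : ℕ) :
    compositionSum W (m + 1) n =
      ∑ p ∈ Finset.range (n + 1), compositionSum W m p * W m p (n - p) := by
  rw [Finset.sum_range_succ, Nat.sub_self, hW, mul_one]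
  rcases eq_or_ne n 0 with rfl | hn
  · simp [compositionSum_zero_right]
  · rw [compositionSum_eq_sum_lastBlock W (m + 1) hn, Finset.sum_range_succ,
      ← compositionSum_eq_sum_lastBlock W m hn, add_comm]

theorem compositionSum_eq_sum_strictMono (m n : ℕ) :
    compositionSum W m n = ∑ c : Composition n,
      ∑ l ∈ Finset.univ.filter (fun l : Fin c.length → Fin m => StrictMono l),
        ∏ r : Fin c.length, W (l r) (c.sizeUpTo r) (c.blocksFun r) := by
  refine Finset.sum_congr rfl fun c _ => ?_
  have hgetD (r : Fin c.length) : c.blocks.getD r 0 = c.blocksFun r :=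
    List.getD_eq_getElem _ _ r.2
  rw [← sum_increasingTuples_eq_sum_fin c.length m
    fun l => ∏ r : Fin c.length, W (l r) (c.sizeUpTo r) (c.blocksFun r)]
  simp only [← hgetD]
  rfl

end CompositionSum

section Partition

variable {𝕜 : Type*} [RCLike 𝕜] {f : ℕ → ℝ → 𝕜} {τ : ℕ → ℝ} {m : ℕ}

theorem iteratedIntegral_eq_compositionSum (hτ : Monotone τ)
    (hf : ∀ i < m, ∀ k, IntervalIntegrable (f k) volume (τ i) (τ (i + 1))) (n : ℕ) :
    iteratedIntegral f (τ 0) (τ m) n = compositionSum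
      (fun i p b => iteratedIntegral (fun k => f (p + k)) (τ i) (τ (i + 1)) b) m n := by
  induction m generalizing n with
  | zero =>
    rcases eq_or_ne n 0 with rfl | hn
    · rw [iteratedIntegral_zero, compositionSum_zero_right]
    · rw [iteratedIntegral_self f _ hn, compositionSum_zero_left _ hn]
  | succ m ih =>
    rw [compositionSum_succ_left _ fun _ _ => iteratedIntegral_zero _ _ _,
      iteratedIntegral_eq_sum_mul (hτ m.zero_le) (hτ m.le_succ)
        fun k _ => .trans_iterate fun i hi => hf i hi k]
    simp only [ih fun i hi => hf i (hi.trans m.lt_succ_self)]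

theorem iteratedIntegral_eq_sum_composition_of_piecewise_const (hτ : Monotone τ)
    {a : ℕ → ℕ → 𝕜} (hf : ∀ i < m, ∀ k, ∀ r ∈ Set.Ioo (τ i) (τ (i + 1)), f k r = a k i) (n : ℕ) :
    iteratedIntegral f (τ 0) (τ m) n = ∑ c : Composition n,
      (1 / ∏ r : Fin c.length, ((c.blocksFun r)! : 𝕜)) *
        ∑ l ∈ Finset.univ.filter (fun l : Fin c.length → Fin m => StrictMono l),
          ∏ r : Fin c.length, ∏ q : Fin (c.blocksFun r),
            (τ (l r + 1) - τ (l r)) • a (c.sizeUpTo r + q) (l r) := by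
  have hint : ∀ i < m, ∀ k, IntervalIntegrable (f k) volume (τ i) (τ (i + 1)) := fun i hi k =>
    (intervalIntegrable_const (c := a k i)).congr_uIoo fun r hr =>
      (hf i hi k r (by rwa [Set.uIoo_of_le (hτ i.le_succ)] at hr)).symm
  rw [iteratedIntegral_eq_compositionSum hτ hint, compositionSum_eq_sum_strictMono]
  refine Finset.sum_congr rfl fun c _ => ?_
  rw [Finset.mul_sum]
  refine Finset.sum_congr rfl fun l _ => ?_
  rw [one_div, ← Finset.prod_inv_distrib, ← Finset.prod_mul_distrib]
  refine Finset.prod_congr rfl fun r _ => ?_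
  rw [iteratedIntegral_of_const (b := fun k => a (c.sizeUpTo r + k) (l r)) (hτ (Nat.le_succ _))
    fun k _ => hf (l r) (l r).2 (c.sizeUpTo r + k)]
  simp only [RCLike.real_smul_eq_coe_mul, Finset.prod_mul_distrib, Finset.prod_const,
    Finset.card_univ, Fintype.card_fin]
  push_cast
  ring

end Partition

theorem sigCoeff_eq_iteratedIntegral {d : ℕ} (X : ℝ → Fin d → ℝ) (s t : ℝ) (n : ℕ)
    (w : ℕ → Fin d) :
    sigCoeff X s t n w = iteratedIntegral (fun k => deriv fun r => X r (w k)) s t n := by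
  rcases eq_or_ne n 0 with rfl | hn
  · rw [sigCoeff, if_pos rfl, iteratedIntegral_zero]
  · rw [sigCoeff, if_neg hn, iteratedIntegral]

section LinearInterpolation

variable {τ : ℕ → ℝ} {m : ℕ}

/-- The path `X` interpolates `x 0, …, x m` linearly at the knots `τ 0, …, τ m`. Nothing is
required of `X` outside `[τ 0, τ m]`. -/
def IsLinearInterpolation {V : Type*} [AddCommGroup V] [Module ℝ V] (X : ℝ → V) (x : ℕ → V)
    (τ : ℕ → ℝ) (m : ℕ) : Prop :=
  ∀ i < m, ∀ t ∈ Set.Icc (τ i) (τ (i + 1)),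
    X t = AffineMap.lineMap (x i) (x (i + 1)) ((t - τ i) / (τ (i + 1) - τ i))

theorem IsLinearInterpolation.mono {V : Type*} [AddCommGroup V] [Module ℝ V] {X : ℝ → V}
    {x : ℕ → V} {N : ℕ} (hX : IsLinearInterpolation X x τ N) (hm : m ≤ N) :
    IsLinearInterpolation X x τ m :=
  fun i hi => hX i (hi.trans_le hm)

theorem isLinearInterpolation_natCast_of_floor {ι : Type*} {N : ℕ} {X : ℝ → ι → ℝ}
    {x : ℕ → ι → ℝ} (hX : ∀ t ∈ Set.Icc (0 : ℝ) N, ∀ j,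
      X t j = x ⌊t⌋.toNat j + (t - ⌊t⌋) * (x (⌊t⌋.toNat + 1) j - x ⌊t⌋.toNat j)) :
    IsLinearInterpolation X x Nat.cast N := by
  intro i hi t ht
  have hiN : (i : ℝ) + 1 ≤ N := by exact_mod_cast hi
  rw [Nat.cast_succ] at ht
  ext j
  rw [hX t ⟨i.cast_nonneg.trans ht.1, ht.2.trans hiN⟩ j]
  rcases ht.2.eq_or_lt with rfl | hlt
  · simp [AffineMap.lineMap_apply]
  · have hfloor : ⌊t⌋ = (i : ℤ) := Int.floor_eq_iff.2 ⟨by simpa using ht.1, by simpa using hlt⟩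
    simp [hfloor, AffineMap.lineMap_apply, add_comm]

theorem IsLinearInterpolation.hasDerivAt {E : Type*} [NormedAddCommGroup E] [NormedSpace ℝ E]
    {X : ℝ → E} {x : ℕ → E} {i : ℕ} (hX : IsLinearInterpolation X x τ m)
    (hi : i < m) {r : ℝ} (hr : r ∈ Set.Ioo (τ i) (τ (i + 1))) :
    HasDerivAt X ((τ (i + 1) - τ i)⁻¹ • (x (i + 1) - x i)) r := by
  have hline : HasDerivAt
      (fun t => AffineMap.lineMap (x i) (x (i + 1)) ((t - τ i) / (τ (i + 1) - τ i)))
      ((τ (i + 1) - τ i)⁻¹ • (x (i + 1) - x i)) r := by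
    simpa [Function.comp_def] using AffineMap.hasDerivAt_lineMap.scomp r
      (((hasDerivAt_id r).sub_const (τ i)).div_const (τ (i + 1) - τ i))
  refine hline.congr_of_eventuallyEq ?_
  filter_upwards [Ioo_mem_nhds hr.1 hr.2] with t ht
  exact hX i hi t (Set.Ioo_subset_Icc_self ht)

end LinearInterpolation

theorem signature_of_linear_interpolation_eq_composition_sum_general {d m : ℕ}
    {x : ℕ → Fin d → ℝ} {X : ℝ → Fin d → ℝ} {τ : ℕ → ℝ} (hτ : StrictMono τ)
    (hX : IsLinearInterpolation X x τ m) (n : ℕ) (w : ℕ → Fin d) :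
    sigCoeff X (τ 0) (τ m) n w =
      ∑ c : Composition n,
        (1 / ∏ r : Fin c.length, ((c.blocksFun r)! : ℝ)) *
          ∑ l ∈ Finset.univ.filter (fun l : Fin c.length → Fin m => StrictMono l),
            ∏ r : Fin c.length, ∏ q : Fin (c.blocksFun r),
              (x ((l r : ℕ) + 1) (w (c.sizeUpTo r + q)) -
                x (l r : ℕ) (w (c.sizeUpTo r + q))) := by
  have hderiv : ∀ i < m, ∀ k, ∀ r ∈ Set.Ioo (τ i) (τ (i + 1)),
      deriv (fun u => X u (w k)) r =
        (τ (i + 1) - τ i)⁻¹ • (x (i + 1) (w k) - x i (w k)) := fun i hi k r hr =>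
    (hasDerivAt_pi.1 (hX.hasDerivAt hi hr) (w k)).deriv
  have hstep (i : ℕ) : τ (i + 1) - τ i ≠ 0 := (sub_pos.2 (hτ i.lt_succ_self)).ne'
  rw [sigCoeff_eq_iteratedIntegral,
    iteratedIntegral_eq_sum_composition_of_piecewise_const hτ.monotone hderiv]
  simp only [smul_inv_smul₀ (hstep _)]

/-- The signature of the piecewise linear interpolation of a time series `x` equals the
Hoffman-type composition sum of iterated sums of `x`. -/
theorem signature_of_linear_interpolation_eq_composition_sum {d : ℕ} (N : ℕ) (hN : 1 ≤ N)
    (x : ℕ → Fin d → ℝ) (X : ℝ → Fin d → ℝ)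
    (hX : ∀ t ∈ Set.Icc (0:ℝ) (N:ℝ), ∀ j : Fin d,
      X t j = x ⌊t⌋.toNat j + (t - ⌊t⌋) * (x (⌊t⌋.toNat + 1) j - x ⌊t⌋.toNat j))
    (m : ℕ) (hm : m ≤ N) (n : ℕ) (hn : 1 ≤ n) (w : ℕ → Fin d) :
    sigCoeff X 0 (m : ℝ) n w =
      ∑ c : Composition n,
        (1 / ∏ r : Fin c.length, ((c.blocksFun r)! : ℝ)) *
          ∑ l ∈ Finset.univ.filter (fun l : Fin c.length → Fin m => StrictMono l),
            ∏ r : Fin c.length, ∏ q : Fin (c.blocksFun r),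
              (x ((l r : ℕ) + 1) (w (c.sizeUpTo r + q)) -
                x (l r : ℕ) (w (c.sizeUpTo r + q))) := by
  simpa only [Nat.cast_zero] using
    signature_of_linear_interpolation_eq_composition_sum_general Nat.strictMono_cast
      ((isLinearInterpolation_natCast_of_floor hX).mono hm) n w
end

section
/- Let x_0,…,x_N ∈ ℝ, let 0 ≤ m ≤ N and n ≥ 1 be integers. Then (x_m − x_0)^n/n! = Σ_{I composition of n, I = (I_1,…,I_k)} (1/I!)·Σ_{0 ≤ l_1 < l_2 < ⋯ < l_k < m} ∏_{r=1}^{k} (x_{l_r+1} − x_{l_r})^{I_r}. -/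
open scoped Nat

/-!
Expand `(∑ i, a i) ^ n / n!` by the multinomial theorem: it is the sum of `∏ i, a i ^ k i / (k i)!`
over all exponent vectors `k` of total degree `n`. Listing the nonzero entries of `k` in increasing
order of their positions records `k` as a composition of `n` (the entries) together with a strictly
increasing sequence of indices (the positions), and this is a bijection. Zero exponents contribute
the factor `1`, so the sum over exponent vectors is the composition sum. An increment of a time
series is the sum of its successive differences, to which the identity applies.
-/

section ExponentVectors

variable {ι : Type*} {n : ℕ}

/-- The exponent vector of the monomial `∏ r, X (l r) ^ c.blocksFun r`: the blocks of `c` placed at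
the positions `l`, and `0` elsewhere. Meaningful for injective `l` only; otherwise the value at a
repeated position is an arbitrary one of the blocks placed there. -/
noncomputable def exponentVector (c : Composition n) (l : Fin c.length → ι) : ι → ℕ :=
  Function.extend l c.blocksFun 0

theorem exponentVector_apply (c : Composition n) {l : Fin c.length → ι} (hl : l.Injective)
    (r : Fin c.length) : exponentVector c l (l r) = c.blocksFun r :=
  hl.extend_apply _ _ r

theorem exponentVector_of_notMem_range (c : Composition n) {l : Fin c.length → ι} {i : ι}
    (hi : i ∉ Set.range l) : exponentVector c l i = 0 :=
  Function.extend_apply' _ _ i hi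

theorem support_exponentVector (c : Composition n) {l : Fin c.length → ι} (hl : l.Injective) :
    Function.support (exponentVector c l) = Set.range l := by
  ext i
  refine ⟨fun hi => by_contra fun hil => hi (exponentVector_of_notMem_range c hil), ?_⟩
  rintro ⟨r, rfl⟩
  rw [Function.mem_support, exponentVector_apply c hl]
  exact Nat.one_le_iff_ne_zero.1 (c.one_le_blocksFun r)

theorem map_exponentVector_ofFn (c : Composition n) {l : Fin c.length → ι} (hl : l.Injective) :
    (List.ofFn l).map (exponentVector c l) = c.blocks := by
  rw [List.map_ofFn, ← c.ofFn_blocksFun]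
  exact congrArg List.ofFn (funext (exponentVector_apply c hl))

theorem prod_exponentVector [Fintype ι] {M : Type*} [CommMonoid M] {F : ι → ℕ → M}
    (hF : ∀ i, F i 0 = 1) (c : Composition n) {l : Fin c.length → ι} (hl : l.Injective) :
    ∏ i, F i (exponentVector c l i) = ∏ r, F (l r) (c.blocksFun r) := by
  refine (Fintype.prod_of_injective l hl _ _ (fun i hi => ?_) fun r => ?_).symm
  · rw [exponentVector_of_notMem_range c hi, hF]
  · rw [exponentVector_apply c hl]

theorem sum_exponentVector [Fintype ι] (c : Composition n) {l : Fin c.length → ι}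
    (hl : l.Injective) : ∑ i, exponentVector c l i = n := by
  rw [← Fintype.sum_of_injective l hl _ _ (fun _ => exponentVector_of_notMem_range c)
    fun r => (exponentVector_apply c hl r).symm, c.sum_blocksFun]

theorem eq_of_exponentVector_eq [PartialOrder ι] {c c' : Composition n}
    {l : Fin c.length → ι} {l' : Fin c'.length → ι} (hl : StrictMono l) (hl' : StrictMono l')
    (h : exponentVector c l = exponentVector c' l') :
    (⟨c, l⟩ : Σ c : Composition n, Fin c.length → ι) = ⟨c', l'⟩ := by
  have range_eq : Set.range l = Set.range l' := by
    rw [← support_exponentVector c hl.injective, h, support_exponentVector c' hl'.injective]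
  have positions_eq : List.ofFn l = List.ofFn l' :=
    hl.sortedLT_ofFn.eq_of_mem_iff hl'.sortedLT_ofFn fun i => by
      simpa only [List.mem_ofFn, Set.mem_range] using Set.ext_iff.1 range_eq i
  obtain rfl : c = c' := Composition.ext <| by
    rw [← map_exponentVector_ofFn c hl.injective, h, positions_eq,
      map_exponentVector_ofFn c' hl'.injective]
  rw [List.ofFn_injective positions_eq]

theorem exists_exponentVector_eq [Fintype ι] [LinearOrder ι] {k : ι → ℕ}
    (hk : ∑ i, k i = n) :
    ∃ (c : Composition n) (l : Fin c.length → ι), StrictMono l ∧ exponentVector c l = k := by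
  let positions : Finset ι := Finset.univ.filter (k · ≠ 0)
  let c : Composition n :=
    { blocks := positions.sort.map k
      blocks_pos := by
        simp only [List.mem_map, Finset.mem_sort, positions, Finset.mem_filter_univ]
        rintro _ ⟨i, hi, rfl⟩
        exact Nat.pos_of_ne_zero hi
      blocks_sum := by
        rw [← List.sum_toFinset k (positions.sort_nodup _), Finset.sort_toFinset,
          Finset.sum_filter_ne_zero, hk] }
  have card_positions : positions.card = c.length := by simp [c, Composition.length]
  let l := positions.orderEmbOfFin card_positions
  refine ⟨c, l, l.strictMono, funext fun i => ?_⟩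
  by_cases hi : i ∈ Set.range l
  · obtain ⟨r, rfl⟩ := hi
    rw [exponentVector_apply c l.injective]
    simp [Composition.blocksFun, c, l, Finset.orderEmbOfFin_apply]
  · rw [exponentVector_of_notMem_range c hi]
    simpa [l, positions, eq_comm] using hi

theorem sum_piAntidiag_eq_sum_composition [Fintype ι] [LinearOrder ι] {M : Type*}
    [AddCommMonoid M] (n : ℕ) (G : (ι → ℕ) → M) :
    ∑ k ∈ Finset.piAntidiag Finset.univ n, G k =
      ∑ c : Composition n,
        ∑ l ∈ Finset.univ.filter (fun l : Fin c.length → ι => StrictMono l),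
          G (exponentVector c l) := by
  rw [Finset.sum_sigma']
  symm
  refine Finset.sum_nbij (fun p => exponentVector p.1 p.2) ?maps_to ?inj_on ?surj_on fun _ _ => rfl
  case maps_to =>
    rintro ⟨c, l⟩ hl
    simp only [Finset.mem_sigma, Finset.mem_univ, Finset.mem_filter_univ, true_and] at hl
    simp [sum_exponentVector c hl.injective]
  case inj_on =>
    rintro ⟨c, l⟩ hl ⟨c', l'⟩ hl' h
    simp only [Finset.mem_coe, Finset.mem_sigma, Finset.mem_univ, Finset.mem_filter_univ,
      true_and] at hl hl'
    exact eq_of_exponentVector_eq hl hl' h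
  case surj_on =>
    intro k hk
    obtain ⟨c, l, hl, rfl⟩ := exists_exponentVector_eq (Finset.mem_piAntidiag.1 hk).1
    exact ⟨⟨c, l⟩, by simpa using hl, rfl⟩

end ExponentVectors

section PowDivFactorial

variable {K ι : Type*} [Semifield K] [CharZero K]

theorem sum_pow_div_factorial_eq_sum_piAntidiag [DecidableEq ι] (s : Finset ι) (a : ι → K)
    (n : ℕ) :
    (∑ i ∈ s, a i) ^ n / (n ! : K) =
      ∑ k ∈ Finset.piAntidiag s n, ∏ i ∈ s, a i ^ k i / ((k i)! : K) := by
  rw [Finset.sum_pow_eq_sum_piAntidiag, Finset.sum_div]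
  refine Finset.sum_congr rfl fun k hk => ?_
  have factorial_eq : (n ! : K) = (∏ i ∈ s, ((k i)! : K)) * Nat.multinomial s k := by
    rw [← (Finset.mem_piAntidiag.1 hk).1, ← Nat.multinomial_spec, Nat.cast_mul, Nat.cast_prod]
  have multinomial_ne_zero : (Nat.multinomial s k : K) ≠ 0 :=
    right_ne_zero_of_mul (factorial_eq ▸ Nat.cast_ne_zero.2 n.factorial_ne_zero)
  rw [factorial_eq, Finset.prod_div_distrib, mul_comm, mul_div_mul_right _ _ multinomial_ne_zero]

theorem sum_pow_div_factorial_eq_sum_composition [Fintype ι] [LinearOrder ι] (a : ι → K) (n : ℕ) :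
    (∑ i, a i) ^ n / (n ! : K) =
      ∑ c : Composition n,
        (1 / ∏ r : Fin c.length, ((c.blocksFun r)! : K)) *
          ∑ l ∈ Finset.univ.filter (fun l : Fin c.length → ι => StrictMono l),
            ∏ r : Fin c.length, a (l r) ^ c.blocksFun r := by
  rw [sum_pow_div_factorial_eq_sum_piAntidiag, sum_piAntidiag_eq_sum_composition]
  refine Finset.sum_congr rfl fun c _ => ?_
  rw [Finset.mul_sum]
  refine Finset.sum_congr rfl fun l hl => ?_
  rw [prod_exponentVector (F := fun i e => a i ^ e / (e ! : K)) (by simp) c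
    ((Finset.mem_filter_univ l).1 hl).injective, Finset.prod_div_distrib, one_div_mul_eq_div]

end PowDivFactorial

theorem pow_increment_eq_composition_sum_general {K : Type*} [Field K] [CharZero K] (x : ℕ → K)
    (m n : ℕ) :
    (x m - x 0) ^ n / (n ! : K) =
      ∑ c : Composition n,
        (1 / ∏ r : Fin c.length, ((c.blocksFun r)! : K)) *
          ∑ l ∈ Finset.univ.filter (fun l : Fin c.length → Fin m => StrictMono l),
            ∏ r : Fin c.length, (x ((l r : ℕ) + 1) - x (l r : ℕ)) ^ (c.blocksFun r) := by
  rw [← Finset.sum_range_sub x m, ← Fin.sum_univ_eq_sum_range (fun j => x (j + 1) - x j)]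
  exact sum_pow_div_factorial_eq_sum_composition (fun j : Fin m => x (j + 1) - x j) n

/-- One-dimensional case: the `n`-th power of an increment of a time series, divided by `n!`,
equals the Hoffman-type composition sum of iterated sums. -/
theorem pow_increment_eq_composition_sum (N : ℕ) (x : ℕ → ℝ)
    (m : ℕ) (hm : m ≤ N) (n : ℕ) (hn : 1 ≤ n) :
    (x m - x 0) ^ n / (n ! : ℝ) =
      ∑ c : Composition n,
        (1 / ∏ r : Fin c.length, ((c.blocksFun r)! : ℝ)) *
          ∑ l ∈ Finset.univ.filter (fun l : Fin c.length → Fin m => StrictMono l),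
            ∏ r : Fin c.length, (x ((l r : ℕ) + 1) - x (l r : ℕ)) ^ (c.blocksFun r) :=
  pow_increment_eq_composition_sum_general x m n
end
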